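/- Let n ≥ 1 and let X_{n+2} ⊂ ℙⁿ × ℙ³ be the hypersurface Σ_{i=0}^{3} l_i(x) y_i³ = 0, where l_0, …, l_3 are linear forms in x_0, …, x_n with rational coefficients any max(n+1,4) of which are linearly independent. Then the Picard group of X_{n+2} over an arbitrary field containing ℚ is isomorphic to ℤ ⊕ ℤ. -/

import Mathlib

/-!
**Statement 2.**  For `n ≥ 1` and the hypersurface `X_{n+2} ⊂ ℙⁿ × ℙ³` defined by
`P(x,y) = ∑ᵢ lᵢ(x) yᵢ³ = 0` (any `min (n+1) 4` of the rational linear forms `lᵢ` linearly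
independent), the Picard group of `X_{n+2}` over an arbitrary field containing `ℚ` is
isomorphic to `ℤ ⊕ ℤ`.

Formalization conventions:  `X_{n+2}` is smooth, so its Picard group (the group of
isomorphism classes of line bundles) coincides with its Weil divisor class group, which we
construct explicitly from the bihomogeneous coordinate ring:

* a *prime divisor* of `X_{n+2}` over `K` is a bihomogeneous relevant prime ideal `p` of
  `K[x₀,…,x_n,y₀,…,y₃]` containing `P` such that `p/(P)` has height 1;
* for a prime divisor `p`, the order of vanishing along `p` of a bihomogeneous form `f`
  not vanishing on `X` is `ord_p f = sup {m | f ∈ p⁽ᵐ⁾ mod (P)}` (the symbolic power,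
  i.e. `∃ s ∉ p, s·f ∈ pᵐ + (P)`); this is the normalized valuation of the discrete
  valuation ring `O_{X,p}`;
* the divisor class group is the quotient of the group `⨁_p ℤ` of divisors by the
  subgroup of principal divisors `div(f/g) = (ord_p f - ord_p g)_p`, for `f, g`
  bihomogeneous of the same bidegree and not vanishing identically on `X`.
-/

open MvPolynomial

noncomputable section

/-- `x`-variables have biweight `(1,0)`, `y`-variables `(0,1)`. -/
def biWeight (n : ℕ) : (Fin (n + 1) ⊕ Fin 4) → ℕ × ℕ :=
  Sum.elim (fun _ => ((1 : ℕ), (0 : ℕ))) (fun _ => ((0 : ℕ), (1 : ℕ)))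

/-- The defining polynomial `P(x,y) = ∑ᵢ lᵢ(x) yᵢ³` of `X_{n+2}`, over a field `K ⊇ ℚ`. -/
def cubicBundlePolyK (n : ℕ) (c : Fin 4 → Fin (n + 1) → ℚ) (K : Type*) [Field K]
    [CharZero K] : MvPolynomial (Fin (n + 1) ⊕ Fin 4) K :=
  ∑ i : Fin 4, (∑ j, C (algebraMap ℚ K (c i j)) * X (Sum.inl j)) * X (Sum.inr i) ^ 3

variable (n : ℕ) (c : Fin 4 → Fin (n + 1) → ℚ) (K : Type) [Field K] [CharZero K]

/-- A prime divisor of `X_{n+2}` over `K`: a bihomogeneous prime ideal of the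
bihomogeneous coordinate ring of `ℙⁿ × ℙ³`, containing the defining polynomial `P`, not
containing either irrelevant ideal, and of height one over `(P)`. -/
structure IsPrimeDivisor (p : Ideal (MvPolynomial (Fin (n + 1) ⊕ Fin 4) K)) : Prop where
  prime : p.IsPrime
  bihom : ∀ f ∈ p, ∀ d : ℕ × ℕ, weightedHomogeneousComponent (biWeight n) d f ∈ p
  relevant_x : ∃ j : Fin (n + 1), X (Sum.inl j) ∉ p
  relevant_y : ∃ i : Fin 4, X (Sum.inr i) ∉ p
  mem : cubicBundlePolyK n c K ∈ p
  exists_lt : ∃ q : Ideal (MvPolynomial (Fin (n + 1) ⊕ Fin 4) K),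
    q.IsPrime ∧ cubicBundlePolyK n c K ∈ q ∧ q < p
  height_one : ∀ q : Ideal (MvPolynomial (Fin (n + 1) ⊕ Fin 4) K),
    q.IsPrime → cubicBundlePolyK n c K ∈ q → q < p →
      ∀ r : Ideal (MvPolynomial (Fin (n + 1) ⊕ Fin 4) K),
        r.IsPrime → cubicBundlePolyK n c K ∈ r → r ≤ q → r = q

/-- The type of prime divisors of `X_{n+2}` over `K`. -/
def PrimeDivisor : Type :=
  {p : Ideal (MvPolynomial (Fin (n + 1) ⊕ Fin 4) K) // IsPrimeDivisor n c K p}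

/-- The order of vanishing along the prime divisor `p` of a form `f`: the largest `m`
with `f ∈ p⁽ᵐ⁾` (symbolic power) in the coordinate ring of `X_{n+2}`, i.e. such that
`s·f ∈ pᵐ + (P)` for some `s ∉ p`. -/
def ordAt (p : PrimeDivisor n c K) (f : MvPolynomial (Fin (n + 1) ⊕ Fin 4) K) : ℕ :=
  sSup {m : ℕ | ∃ s, s ∉ p.1 ∧ s * f ∈ p.1 ^ m ⊔ Ideal.span {cubicBundlePolyK n c K}}

/-- The subgroup of principal divisors: the subgroup of the divisor group
`⨁_p ℤ = PrimeDivisor →₀ ℤ` generated by the divisors `div(f/g) = (ord_p f - ord_p g)_p`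
of ratios of bihomogeneous forms of equal bidegree not vanishing identically on
`X_{n+2}`. -/
def principalDivisors : AddSubgroup (PrimeDivisor n c K →₀ ℤ) :=
  AddSubgroup.closure
    {D | ∃ (f g : MvPolynomial (Fin (n + 1) ⊕ Fin 4) K) (d : ℕ × ℕ),
      f.IsWeightedHomogeneous (biWeight n) d ∧ g.IsWeightedHomogeneous (biWeight n) d ∧
      f ∉ Ideal.span {cubicBundlePolyK n c K} ∧ g ∉ Ideal.span {cubicBundlePolyK n c K} ∧
      ∀ p : PrimeDivisor n c K, D p = (ordAt n c K p f : ℤ) - (ordAt n c K p g : ℤ)}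

/-- The divisor class group of `X_{n+2}` over `K`; since `X_{n+2}` is smooth, this is its
Picard group. -/
def PicX : Type :=
  (PrimeDivisor n c K →₀ ℤ) ⧸ principalDivisors n c K

instance : AddCommGroup (PicX n c K) :=
  QuotientAddGroup.Quotient.addCommGroup (principalDivisors n c K)

/-!
Write `P = x_{j₀} F + P'`, where the cubic form `F(y)` is the coefficient of `x_{j₀}`. Inverting `F`
eliminates `x_{j₀} = -P'/F`, so `K[x, y]/(P)` localised at `F` is a localisation of a polynomial
ring, and the prime divisors on which `F` does not vanish are given by the prime forms not
involving `x_{j₀}`. The divisor of `F` is prime for `n ≥ 2`, as `P` is then not in the ideal of the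
pencil spanned by `F` and a second cubic; that ideal is prime by Kummer theory. For `n = 1`, where
`P = x_{j₀} F + x_{j₁} F'`, the divisor of `F` splits into `F = x_{j₁} = 0` and `F = F' = 0`.

Hence every divisor is the divisor of a quotient of forms, and a quotient of forms without zeros and
poles has bidegree `0`. So the bidegree identifies the class group with `ℤ × ℤ`. A rational change
of the coordinates `x` ensures that `F` and the pencil are sufficiently general.
-/

/-! ### Weighted homogeneous polynomials -/

section WeightedHomogeneous

variable {σ τ R M N : Type*} [CommSemiring R] [AddCommMonoid M] [AddCommMonoid N]

theorem weightedHomogeneousComponent_mem_span {w : σ → M} {s : Set (MvPolynomial σ R)}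
    (hs : ∀ f ∈ s, ∃ d, f.IsWeightedHomogeneous w d) {f : MvPolynomial σ R}
    (hf : f ∈ Ideal.span s) (d : M) : weightedHomogeneousComponent w d f ∈ Ideal.span s := by
  classical
  let := weightedGradedAlgebra R w
  exact weightedHomogeneousComponent_mem_of_mem R w (Ideal.homogeneous_span _ s hs) hf d

theorem weightedHomogeneousComponent_induction (w : σ → M) {motive : MvPolynomial σ R → Prop}
    (f : MvPolynomial σ R) (zero : motive 0) (add : ∀ a b, motive a → motive b → motive (a + b))
    (comp : ∀ d, motive (weightedHomogeneousComponent w d f)) : motive f := by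
  rw [← sum_weightedHomogeneousComponent w f,
    finsum_eq_sum _ (weightedHomogeneousComponent_finsupp f)]
  exact Finset.sum_induction _ motive add zero fun d _ => comp d

theorem exists_weightedHomogeneousComponent_notMem (w : σ → M) {I : Ideal (MvPolynomial σ R)}
    {f : MvPolynomial σ R} (hf : f ∉ I) : ∃ d, weightedHomogeneousComponent w d f ∉ I := by
  by_contra! h
  exact hf (weightedHomogeneousComponent_induction w f I.zero_mem (fun _ _ => I.add_mem) h)

theorem isWeightedHomogeneous_map_algHom {w : σ → M} {w' : τ → N} (g : M →+ N)
    {φ : MvPolynomial σ R →ₐ[R] MvPolynomial τ R}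
    (hφ : ∀ i, (φ (X i)).IsWeightedHomogeneous w' (g (w i)))
    {f : MvPolynomial σ R} {d : M} (hf : f.IsWeightedHomogeneous w d) :
    (φ f).IsWeightedHomogeneous w' (g d) := by
  induction hf using IsWeightedHomogeneous.induction_on with
  | zero => simpa using isWeightedHomogeneous_zero R w' _
  | add p q _ _ hp hq => rw [map_add]; exact hp.add hq
  | monomial m r hm =>
    rw [monomial_eq, map_mul, ← algebraMap_eq, AlgHom.commutes, algebraMap_eq, Finsupp.prod,
      map_prod, ← hm, Finsupp.weight_apply, map_finsuppSum, Finsupp.sum]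
    refine .C_mul (IsWeightedHomogeneous.prod _ _ _ fun i _ => ?_) r
    rw [map_pow, map_nsmul]
    exact (hφ i).pow _

theorem weightedHomogeneousComponent_map_algHom {w : σ → M} {w' : τ → N} {g : M →+ N}
    (hg : Function.Injective g) {φ : MvPolynomial σ R →ₐ[R] MvPolynomial τ R}
    (hφ : ∀ i, (φ (X i)).IsWeightedHomogeneous w' (g (w i))) (f : MvPolynomial σ R) (d : M) :
    weightedHomogeneousComponent w' (g d) (φ f) = φ (weightedHomogeneousComponent w d f) := by
  refine weightedHomogeneousComponent_induction w
    (motive := fun f => weightedHomogeneousComponent w' (g d) (φ f) =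
      φ (weightedHomogeneousComponent w d f)) f (by simp)
    (fun a b ha hb => by simp [ha, hb]) fun e => ?_
  have he := weightedHomogeneousComponent_isWeightedHomogeneous (w := w) e f
  have he' := isWeightedHomogeneous_map_algHom g hφ he
  by_cases hde : d = e
  · subst hde
    rw [weightedHomogeneousComponent_eq_self he, weightedHomogeneousComponent_eq_self he']
  · rw [he.weightedHomogeneousComponent_ne d hde,
      he'.weightedHomogeneousComponent_ne _ (hg.ne hde), map_zero]

theorem weightedHomogeneousComponent_mul_of_uniqueAdd [DecidableEq M] (w : σ → M)
    {f g : MvPolynomial σ R} {a b : M}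
    (h : UniqueAdd (f.support.image (Finsupp.weight w)) (g.support.image (Finsupp.weight w)) a b) :
    weightedHomogeneousComponent w (a + b) (f * g) =
      weightedHomogeneousComponent w a f * weightedHomogeneousComponent w b g := by
  classical
  ext m
  rw [coeff_weightedHomogeneousComponent, coeff_mul, coeff_mul,
    ← Finset.sum_const_zero (s := Finset.HasAntidiagonal.antidiagonal m), ← Finset.sum_ite_irrel]
  refine Finset.sum_congr rfl fun u hu => ?_
  rw [Finset.HasAntidiagonal.mem_antidiagonal] at hu
  simp only [coeff_weightedHomogeneousComponent, ← hu, map_add]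
  by_cases hf : coeff u.1 f = 0
  · simp [hf]
  by_cases hg : coeff u.2 g = 0
  · simp [hg]
  have := h (Finset.mem_image_of_mem _ (mem_support_iff.2 hf))
    (Finset.mem_image_of_mem _ (mem_support_iff.2 hg))
  split_ifs <;> simp_all

theorem weightedHomogeneousComponent_ne_zero [DecidableEq M] {w : σ → M} {f : MvPolynomial σ R}
    {a : M} (ha : a ∈ f.support.image (Finsupp.weight w)) :
    weightedHomogeneousComponent w a f ≠ 0 := by
  obtain ⟨m, hm, rfl⟩ := Finset.mem_image.1 ha
  intro h0
  have := congrArg (coeff m) h0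
  rw [coeff_weightedHomogeneousComponent, if_pos rfl, coeff_zero] at this
  exact mem_support_iff.1 hm this

theorem exists_isWeightedHomogeneous_of_mul [NoZeroDivisors R] [TwoUniqueSums M] {w : σ → M}
    {f g : MvPolynomial σ R} {d : M} (h : (f * g).IsWeightedHomogeneous w d) (hfg : f * g ≠ 0) :
    ∃ e, f.IsWeightedHomogeneous w e := by
  classical
  set A := f.support.image (Finsupp.weight w) with hA
  set B := g.support.image (Finsupp.weight w) with hB
  have add_eq : ∀ a ∈ A, ∀ b ∈ B, UniqueAdd A B a b → a + b = d := by
    intro a ha b hb hab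
    by_contra hne
    have h0 := h.weightedHomogeneousComponent_ne _ hne
    rw [weightedHomogeneousComponent_mul_of_uniqueAdd w hab] at h0
    exact mul_ne_zero (weightedHomogeneousComponent_ne_zero ha)
      (weightedHomogeneousComponent_ne_zero hb) h0
  have hcard : A.card * B.card ≤ 1 := by
    by_contra! hlt
    obtain ⟨p, hp, q, hq, hpq, hpu, hqu⟩ := TwoUniqueSums.uniqueAdd_of_one_lt_card hlt
    rw [Finset.mem_product] at hp hq
    have := hqu hp.1 hp.2
      ((add_eq _ hp.1 _ hp.2 hpu).trans (add_eq _ hq.1 _ hq.2 hqu).symm)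
    exact hpq (Prod.ext this.1 this.2)
  have hApos : 0 < A.card := by simpa [hA] using left_ne_zero_of_mul hfg
  have hBpos : 0 < B.card := by simpa [hB] using right_ne_zero_of_mul hfg
  obtain ⟨e, he⟩ := Finset.card_eq_one.1 (show A.card = 1 by nlinarith)
  refine ⟨e, fun m hm => ?_⟩
  rw [← Finset.mem_singleton, ← he]
  exact Finset.mem_image_of_mem _ (mem_support_iff.2 hm)

end WeightedHomogeneous

/-! ### Pairs of cubic equations -/

section CubicExtensions

theorem prime_of_monic_of_prime_map {A B : Type*} [CommRing A] [CommRing B] {i : A →+* B}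
    (hi : Function.Injective i) {g : Polynomial A} (hg : g.Monic) (h : Prime (g.map i)) :
    Prime g := by
  refine ⟨?_, fun hu => h.not_isUnit (hu.map (Polynomial.mapRingHom i)), fun a b hab => ?_⟩
  · rintro rfl
    exact h.ne_zero (Polynomial.map_zero i)
  · rw [← Polynomial.map_dvd_map i hi hg, Polynomial.map_mul] at hab
    rw [← Polynomial.map_dvd_map i hi hg, ← Polynomial.map_dvd_map i hi hg]
    exact h.dvd_or_dvd hab

theorem adjoinRoot_map_injective {A B : Type*} [CommRing A] [CommRing B] {i : A →+* B}
    (hi : Function.Injective i) {g : Polynomial A} (hg : g.Monic) {g' : Polynomial B}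
    (h : g.map i = g') : Function.Injective (AdjoinRoot.map i g g' h.symm.dvd) := by
  have map_mk : ∀ p, AdjoinRoot.map i g g' h.symm.dvd (AdjoinRoot.mk g p) =
      AdjoinRoot.mk g' (p.map i) := fun p => by
    rw [AdjoinRoot.map, AdjoinRoot.lift_mk, ← Polynomial.eval₂_map, ← AdjoinRoot.aeval_eq,
      Polynomial.aeval_def, AdjoinRoot.algebraMap_eq]
  rw [injective_iff_map_eq_zero]
  intro a ha
  obtain ⟨p, rfl⟩ := AdjoinRoot.mk_surjective a
  rw [map_mk, AdjoinRoot.mk_eq_zero, ← h, Polynomial.map_dvd_map i hi hg] at ha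
  rwa [AdjoinRoot.mk_eq_zero]

theorem exists_pow_eq_of_pow_eq_algebraMap {D k : Type*} [CommRing D] [IsIntegrallyClosed D]
    [Field k] [Algebra D k] [IsFractionRing D k] {m : ℕ} (hm : 0 < m) {x : D} {b : k}
    (hb : b ^ m = algebraMap D k x) : ∃ y : D, y ^ m = x := by
  obtain ⟨y, rfl⟩ := IsIntegrallyClosed.exists_algebraMap_eq_of_isIntegral_pow (R := D) hm
    (hb ▸ isIntegral_algebraMap)
  exact ⟨y, IsFractionRing.injective D k (by rw [map_pow, hb])⟩

theorem prime_X_pow_sub_C {D : Type*} [CommRing D] [IsDomain D] [IsIntegrallyClosed D] {p : ℕ}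
    (hp : p.Prime) {w : D} (hw : ∀ y, y ^ p ≠ w) :
    Prime (Polynomial.X ^ p - Polynomial.C w) := by
  refine prime_of_monic_of_prime_map (IsFractionRing.injective D (FractionRing D))
    (Polynomial.monic_X_pow_sub_C w hp.ne_zero) ?_
  rw [Polynomial.map_sub, Polynomial.map_pow, Polynomial.map_X, Polynomial.map_C]
  refine (X_pow_sub_C_irreducible_of_prime hp fun b hb => ?_).prime
  obtain ⟨y, hy⟩ := exists_pow_eq_of_pow_eq_algebraMap hp.pos hb
  exact hw y hy

theorem pow_ne_squarefree_mul_pow {R : Type*} [CommMonoidWithZero R] [Nontrivial R]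
    [UniqueFactorizationMonoid R] {v w : R} (hv : Squarefree v) (hu : ¬IsUnit v)
    (hvw : IsRelPrime v w) {m : ℕ} (hm : 2 ≤ m) (j : ℕ) (g : R) : g ^ m ≠ v * w ^ j := by
  intro h
  obtain ⟨q, hq, hqv⟩ := WfDvdMonoid.exists_irreducible_factor hu hv.ne_zero
  have hqg : q ∣ g := hq.prime.dvd_of_dvd_pow (h ▸ hqv.mul_right _)
  have hq2 : q * q ∣ v * w ^ j := by
    rw [← h, ← pow_two]
    exact (pow_dvd_pow q hm).trans (pow_dvd_pow_of_dvd hqg m)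
  have hrel : IsRelPrime q w := hvw.of_dvd_left hqv
  exact hq.not_isUnit (hv q ((hrel.mul_left hrel).pow_right.dvd_of_dvd_mul_right hq2))

theorem exists_eq_pow_mul_cube {k : Type*} [Field k] {w v a b e : k} (hw : ∀ x : k, x ^ 3 ≠ w)
    (h0 : a ^ 3 + w * b ^ 3 + w ^ 2 * e ^ 3 + 6 * w * a * b * e = v)
    (h1 : a ^ 2 * b + w * (a * e ^ 2 + b ^ 2 * e) = 0)
    (h2 : a ^ 2 * e + a * b ^ 2 + w * b * e ^ 2 = 0) : ∃ x : k, ∃ j < 3, v = w ^ j * x ^ 3 := by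
  have hw0 : w ≠ 0 := fun h => hw 0 (by simp [h])
  have key : a * (w * e ^ 3 - b ^ 3) = 0 := by linear_combination e * h1 - b * h2
  rcases mul_eq_zero.1 key with rfl | hbe
  · have hbe : b * e ^ 2 = 0 := by simpa [hw0, mul_assoc] using h2
    rcases mul_eq_zero.1 hbe with rfl | he
    · exact ⟨e, 2, by norm_num, by linear_combination -h0⟩
    · obtain rfl : e = 0 := by simpa using he
      exact ⟨b, 1, by norm_num, by linear_combination -h0⟩
  · by_cases he : e = 0
    · subst he
      obtain rfl : b = 0 := by simpa using hbe
      exact ⟨a, 0, by norm_num, by linear_combination -h0⟩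
    · exact absurd (show (b / e) ^ 3 = w by field_simp; linear_combination -hbe) (hw _)

/-- The case of Kummer theory needed here, without a primitive cube root of unity in the base:
expand the cube of `a + b α + e α ^ 2` in the basis `1, α, α ^ 2`. -/
theorem exists_eq_pow_mul_cube_of_cube_eq_algebraMap {k L : Type*} [Field k] [CommRing L]
    [Algebra k L] (h3 : (3 : k) ≠ 0) (pb : PowerBasis k L) (hdim : pb.dim = 3) {w v : k}
    (hgen : pb.gen ^ 3 = algebraMap k L w) (hw : ∀ x : k, x ^ 3 ≠ w) {β : L}
    (hβ : β ^ 3 = algebraMap k L v) : ∃ x : k, ∃ j < 3, v = w ^ j * x ^ 3 := by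
  let B : Module.Basis (Fin 3) k L := pb.basis.reindex (finCongr hdim)
  have hB : ∀ i, B i = pb.gen ^ (i : ℕ) := fun i => by simp [B]
  have expand : ∀ x : Fin 3 → k, ∑ i, x i • B i = algebraMap k L (x 0) +
      algebraMap k L (x 1) * pb.gen + algebraMap k L (x 2) * pb.gen ^ 2 := fun x => by
    simp [Fin.sum_univ_three, hB, Algebra.smul_def]
  obtain ⟨a, b, e, hβ'⟩ : ∃ a b e : k, β =
      algebraMap k L a + algebraMap k L b * pb.gen + algebraMap k L e * pb.gen ^ 2 :=
    ⟨_, _, _, (B.sum_repr β).symm.trans (expand _)⟩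
  have hzero : ∀ i, ![a ^ 3 + w * b ^ 3 + w ^ 2 * e ^ 3 + 6 * w * a * b * e - v,
      3 * (a ^ 2 * b + w * (a * e ^ 2 + b ^ 2 * e)),
      3 * (a ^ 2 * e + a * b ^ 2 + w * b * e ^ 2)] i = 0 := by
    refine Fintype.linearIndependent_iff.1 B.linearIndependent _ ((expand _).trans ?_)
    simp only [Matrix.cons_val, map_add, map_mul, map_sub, map_pow, map_ofNat, ← hgen, ← hβ, hβ']
    ring
  exact exists_eq_pow_mul_cube hw (sub_eq_zero.1 (hzero 0))
    ((mul_eq_zero.1 (hzero 1)).resolve_left h3) ((mul_eq_zero.1 (hzero 2)).resolve_left h3)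

theorem adjoinRoot_root_pow_eq {D : Type*} [CommRing D] (m : ℕ) (w : D) :
    AdjoinRoot.root (Polynomial.X ^ m - Polynomial.C w) ^ m = AdjoinRoot.of _ w := by
  have := AdjoinRoot.eval₂_root (Polynomial.X ^ m - Polynomial.C w)
  rwa [Polynomial.eval₂_sub, Polynomial.eval₂_X_pow, Polynomial.eval₂_C, sub_eq_zero] at this

theorem prime_X_pow_three_sub_C_adjoinRoot {D : Type*} [CommRing D] [IsDomain D]
    [IsIntegrallyClosed D] (h3 : (3 : D) ≠ 0) {w v : D} (hw : ∀ y, y ^ 3 ≠ w)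
    (hvw : ∀ j y, y ^ 3 ≠ v * w ^ j) :
    Prime (Polynomial.X ^ 3 -
      Polynomial.C (AdjoinRoot.of (Polynomial.X ^ 3 - Polynomial.C w) v)) := by
  let k := FractionRing D
  let q := algebraMap D k
  have hq : Function.Injective q := IsFractionRing.injective D k
  let G : Polynomial k := Polynomial.X ^ 3 - Polynomial.C (q w)
  have hG : G.Monic := Polynomial.monic_X_pow_sub_C _ three_ne_zero
  have hwk : ∀ b : k, b ^ 3 ≠ q w := fun b hb => by
    obtain ⟨y, hy⟩ := exists_pow_eq_of_pow_eq_algebraMap three_pos hb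
    exact hw y hy
  have : Fact (Irreducible G) := ⟨X_pow_sub_C_irreducible_of_prime Nat.prime_three hwk⟩
  refine prime_of_monic_of_prime_map (adjoinRoot_map_injective hq
    (Polynomial.monic_X_pow_sub_C w three_ne_zero) (show Polynomial.map q _ = G by simp [G]))
    (Polynomial.monic_X_pow_sub_C _ three_ne_zero) ?_
  rw [Polynomial.map_sub, Polynomial.map_pow, Polynomial.map_X, Polynomial.map_C,
    AdjoinRoot.map_of]
  refine (X_pow_sub_C_irreducible_of_prime Nat.prime_three fun β hβ => ?_).prime
  obtain ⟨b, j, hj, hb⟩ := exists_eq_pow_mul_cube_of_cube_eq_algebraMap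
    (by simpa only [map_ofNat, map_zero] using hq.ne h3) (AdjoinRoot.powerBasis' hG)
    Polynomial.natDegree_X_pow_sub_C (adjoinRoot_root_pow_eq 3 (q w)) hwk hβ
  obtain ⟨y, hy⟩ := exists_pow_eq_of_pow_eq_algebraMap (x := v * w ^ (3 - j)) (b := b * q w)
    three_pos (by
      rw [map_mul, map_pow, hb, mul_pow, mul_right_comm, ← pow_add, Nat.add_sub_cancel' hj.le,
        mul_comm])
  exact hvw _ y hy

end CubicExtensions

section Kummer

variable {σ R : Type*} [CommRing R] {m : ℕ} {a b : σ} {w v : MvPolynomial σ R}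

theorem comap_map_eq_of_comp_eq_mk {S T : Type*} [CommRing S] [CommRing T] {φ : S →+* T}
    {I : Ideal S} {ρ : T →+* S ⧸ I} (h : ρ.comp φ = Ideal.Quotient.mk I) :
    (I.map φ).comap φ = I := by
  refine le_antisymm (fun f hf => ?_) Ideal.le_comap_map
  have hρ : ρ (φ f) ∈ (I.map φ).map ρ := Ideal.mem_map_of_mem ρ hf
  rwa [Ideal.map_map, h, Ideal.map_quotient_self, ← RingHom.comp_apply, h, Ideal.mem_bot,
    Ideal.Quotient.eq_zero_iff_mem] at hρ

open Classical in
/-- The map `R[X] → R[X][α][T]` with `α ^ m = w`, which sends the variable `a` to the root `α`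
and the variable `b` to `T`; if `w` does not involve `a` and `b`, it is division
by `X a ^ m - w`. -/
def rootHom (m : ℕ) (a b : σ) (w : MvPolynomial σ R) :
    MvPolynomial σ R →+* Polynomial (AdjoinRoot (Polynomial.X ^ m - Polynomial.C w)) :=
  eval₂Hom (Polynomial.C.comp ((AdjoinRoot.of _).comp C)) fun i =>
    if i = a then Polynomial.C (AdjoinRoot.root _) else
      if i = b then Polynomial.X else Polynomial.C (AdjoinRoot.of _ (X i))

theorem rootHom_X_left : rootHom m a b w (X a) = Polynomial.C (AdjoinRoot.root _) := by
  simp [rootHom]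

theorem rootHom_X_right (hab : a ≠ b) : rootHom m a b w (X b) = Polynomial.X := by
  simp [rootHom, hab.symm]

theorem rootHom_of_mem_supported {f : MvPolynomial σ R} (hf : f ∈ supported R {a, b}ᶜ) :
    rootHom m a b w f = Polynomial.C (AdjoinRoot.of _ f) := by
  refine hom_congr_vars (f₁ := rootHom m a b w) (f₂ := Polynomial.C.comp (AdjoinRoot.of _))
    (by ext; simp [rootHom]) (fun i hi _ => ?_) rfl
  have := mem_supported.1 hf hi
  simp_all [rootHom]

theorem rootHom_X_left_pow_sub (hw : w ∈ supported R {a, b}ᶜ) :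
    rootHom m a b w (X a ^ m - w) = 0 := by
  rw [map_sub, map_pow, rootHom_X_left, rootHom_of_mem_supported hw, ← map_pow,
    adjoinRoot_root_pow_eq, sub_self]

theorem rootHom_X_right_pow_sub (hab : a ≠ b) (hv : v ∈ supported R {a, b}ᶜ) :
    rootHom m a b w (X b ^ m - v) = Polynomial.X ^ m - Polynomial.C (AdjoinRoot.of _ v) := by
  rw [map_sub, map_pow, rootHom_X_right hab, rootHom_of_mem_supported hv]

theorem comap_map_rootHom (hab : a ≠ b) {I : Ideal (MvPolynomial σ R)} (hI : X a ^ m - w ∈ I) :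
    (I.map (rootHom m a b w)).comap (rootHom m a b w) = I := by
  let ρ := Polynomial.eval₂RingHom
    (AdjoinRoot.lift (f := Polynomial.X ^ m - Polynomial.C w) (Ideal.Quotient.mk I)
      (Ideal.Quotient.mk I (X a)) (by
        rw [Polynomial.eval₂_sub, Polynomial.eval₂_X_pow, Polynomial.eval₂_C, ← map_pow, ← map_sub]
        exact Ideal.Quotient.eq_zero_iff_mem.2 hI))
    (Ideal.Quotient.mk I (X b))
  refine comap_map_eq_of_comp_eq_mk (ρ := ρ) (MvPolynomial.ringHom_ext (fun r => ?_) fun i => ?_)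
  · simp [rootHom, ρ]
  · by_cases hia : i = a
    · simp [hia, rootHom_X_left, ρ]
    · by_cases hib : i = b
      · simp [hib, rootHom_X_right hab, ρ]
      · simp [rootHom, hia, hib, ρ]

theorem isPrime_span_X_pow_sub (hab : a ≠ b) (hw : w ∈ supported R {a, b}ᶜ)
    (h : Prime (Polynomial.X ^ m - Polynomial.C w)) :
    (Ideal.span {X a ^ m - w}).IsPrime := by
  have := AdjoinRoot.isDomain_of_prime h
  rw [← comap_map_rootHom hab (Ideal.mem_span_singleton_self _), Ideal.map_span,
    Set.image_singleton, rootHom_X_left_pow_sub hw, Ideal.span_singleton_eq_bot.2 rfl]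
  exact Ideal.isPrime_bot.comap _

theorem isPrime_span_X_pow_sub_pair (hab : a ≠ b) (hw : w ∈ supported R {a, b}ᶜ)
    (hv : v ∈ supported R {a, b}ᶜ)
    (h : Prime (Polynomial.X ^ m -
      Polynomial.C (AdjoinRoot.of (Polynomial.X ^ m - Polynomial.C w) v))) :
    (Ideal.span {X a ^ m - w, X b ^ m - v}).IsPrime := by
  rw [← comap_map_rootHom hab (Ideal.subset_span (Set.mem_insert _ _)), Ideal.map_span,
    Set.image_pair, rootHom_X_left_pow_sub hw, rootHom_X_right_pow_sub hab hv,
    Ideal.span_insert_zero]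
  exact ((Ideal.span_singleton_prime h.ne_zero).2 h).comap _

end Kummer

section DiagonalPolynomials

variable {F : Type*} [Field F] {a b a' b' : F}

theorem squarefree_C_add_C_mul_X_pow_three [CharZero F] (ha : a ≠ 0) :
    Squarefree (Polynomial.C a + Polynomial.C b * Polynomial.X ^ 3) := by
  refine Polynomial.Separable.squarefree
    ⟨Polynomial.C a⁻¹, -(Polynomial.C (a⁻¹ * 3⁻¹) * Polynomial.X), ?_⟩
  have h1 : Polynomial.C a⁻¹ * Polynomial.C a = 1 := by
    rw [← Polynomial.C_mul, inv_mul_cancel₀ ha, Polynomial.C_1]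
  have h3 : (Polynomial.C (3⁻¹ : F)) * 3 = 1 := by
    rw [← map_ofNat Polynomial.C 3, ← Polynomial.C_mul, inv_mul_cancel₀ (by norm_num),
      Polynomial.C_1]
  simp only [Polynomial.derivative_add, Polynomial.derivative_C, Polynomial.derivative_C_mul_X_pow,
    Polynomial.C_mul, Nat.cast_ofNat, map_ofNat]
  linear_combination h1 - Polynomial.C a⁻¹ * Polynomial.C b * Polynomial.X ^ 3 * h3

theorem not_isUnit_C_add_C_mul_X_pow_three (hb : b ≠ 0) :
    ¬IsUnit (Polynomial.C a + Polynomial.C b * Polynomial.X ^ 3) := fun hu => by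
  have hdeg : (Polynomial.C a + Polynomial.C b * Polynomial.X ^ 3).natDegree = 3 := by
    compute_degree!
  rw [Polynomial.natDegree_eq_zero_of_isUnit hu] at hdeg
  omega

theorem isCoprime_C_add_C_mul (h : a * b' - b * a' ≠ 0) (p : Polynomial F) :
    IsCoprime (Polynomial.C a + Polynomial.C b * p) (Polynomial.C a' + Polynomial.C b' * p) := by
  refine ⟨Polynomial.C ((a * b' - b * a')⁻¹ * b'), -Polynomial.C ((a * b' - b * a')⁻¹ * b), ?_⟩
  have h1 : Polynomial.C (a * b' - b * a')⁻¹ * Polynomial.C (a * b' - b * a') = 1 := by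
    rw [← Polynomial.C_mul, inv_mul_cancel₀ h, Polynomial.C_1]
  simp only [Polynomial.C_mul, Polynomial.C_sub] at h1 ⊢
  linear_combination h1

end DiagonalPolynomials

/-! ### The cubics in the fibres -/

section FibreCubics

/-- The bihomogeneous coordinate ring of `ℙⁿ × ℙ³`, with variables `x_j = X (.inl j)` and
`y_i = X (.inr i)`. -/
abbrev BiRing (n : ℕ) (R : Type*) [CommSemiring R] : Type _ :=
  MvPolynomial (Fin (n + 1) ⊕ Fin 4) R

/-- The diagonal cubic form `∑ᵢ cᵢⱼ yᵢ³`, the coefficient of `x_j` in `P`. -/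
def fibreCubic (j : Fin (n + 1)) : BiRing n K :=
  ∑ i : Fin 4, C (algebraMap ℚ K (c i j)) * X (Sum.inr i) ^ 3

theorem cubicBundlePolyK_eq_sum :
    cubicBundlePolyK n c K = ∑ j, X (Sum.inl j) * fibreCubic n c K j := by
  simp only [cubicBundlePolyK, fibreCubic, Finset.sum_mul, Finset.mul_sum]
  rw [Finset.sum_comm]
  exact Finset.sum_congr rfl fun j _ => Finset.sum_congr rfl fun i _ => by ring

theorem isWeightedHomogeneous_X_inl (R : Type*) [CommSemiring R] (j : Fin (n + 1)) :
    (X (Sum.inl j) : BiRing n R).IsWeightedHomogeneous (biWeight n) (1, 0) :=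
  isWeightedHomogeneous_X R (biWeight n) (Sum.inl j)

theorem isWeightedHomogeneous_X_inr (R : Type*) [CommSemiring R] (i : Fin 4) :
    (X (Sum.inr i) : BiRing n R).IsWeightedHomogeneous (biWeight n) (0, 1) :=
  isWeightedHomogeneous_X R (biWeight n) (Sum.inr i)

theorem isWeightedHomogeneous_fibreCubic (j : Fin (n + 1)) :
    (fibreCubic n c K j).IsWeightedHomogeneous (biWeight n) (0, 3) :=
  IsWeightedHomogeneous.sum _ _ _ fun i _ =>
    .C_mul ((isWeightedHomogeneous_X_inr n K i).pow 3) _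

theorem isWeightedHomogeneous_cubicBundlePolyK :
    (cubicBundlePolyK n c K).IsWeightedHomogeneous (biWeight n) (1, 3) := by
  rw [cubicBundlePolyK_eq_sum]
  exact IsWeightedHomogeneous.sum _ _ _ fun j _ =>
    (isWeightedHomogeneous_X_inl n K j).mul (isWeightedHomogeneous_fibreCubic n c K j)

/-- Columns `a`, `b` of a matrix with four rows, in reduced row echelon form with pivots in the
first two rows and with all remaining minors nonzero. -/
structure IsEchelonPair {F : Type*} [Field F] (a b : Fin 4 → F) : Prop where
  c00 : a 0 = 1
  c10 : a 1 = 0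
  c01 : b 0 = 0
  c11 : b 1 = 1
  c20 : a 2 ≠ 0
  c30 : a 3 ≠ 0
  c21 : b 2 ≠ 0
  c31 : b 3 ≠ 0
  det : a 2 * b 3 - a 3 * b 2 ≠ 0

variable {n} in
/-- Coordinates on `ℙⁿ` in which the pencil spanned by the cubics number `j₀` and `j₁` is in
echelon form, and in which a third cubic, if there is one, is independent of the pencil. -/
structure IsAdapted (j₀ j₁ : Fin (n + 1)) : Prop
    extends IsEchelonPair (fun i => c i j₀) (fun i => c i j₁) where
  ne : j₁ ≠ j₀
  third : (∀ j, j = j₀ ∨ j = j₁) ∨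
    ∃ j₂, c 0 j₂ = 0 ∧ c 1 j₂ = 0 ∧ (c 2 j₂ ≠ 0 ∨ c 3 j₂ ≠ 0)

/-- The binary cubic `-(a y₂³ + b y₃³)`. -/
def binaryCubic (a b : ℚ) : BiRing n K :=
  -(C (algebraMap ℚ K a) * X (Sum.inr 2) ^ 3 + C (algebraMap ℚ K b) * X (Sum.inr 3) ^ 3)

theorem binaryCubic_mem_supported (a b : ℚ) :
    binaryCubic n K a b ∈ supported K {Sum.inr 0, Sum.inr 1}ᶜ := by
  have hX : ∀ i : Fin 4, i ≠ 0 → i ≠ 1 →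
      (X (Sum.inr i) : BiRing n K) ∈ supported K {Sum.inr 0, Sum.inr 1}ᶜ :=
    fun i h0 h1 => X_mem_supported.2 (by simp [h0, h1])
  exact neg_mem (add_mem
    (mul_mem (Subalgebra.algebraMap_mem _ _) (pow_mem (hX 2 (by decide) (by decide)) 3))
    (mul_mem (Subalgebra.algebraMap_mem _ _) (pow_mem (hX 3 (by decide) (by decide)) 3)))

/-- The specialisation `x = 0`, `y = (0, 0, 1, t)`. -/
def evalLine : BiRing n K →ₐ[K] Polynomial K :=
  aeval (Sum.elim (fun _ => 0) ![0, 0, 1, Polynomial.X])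

theorem evalLine_binaryCubic (a b : ℚ) :
    evalLine n K (binaryCubic n K a b) = Polynomial.C (-algebraMap ℚ K a) +
      Polynomial.C (-algebraMap ℚ K b) * Polynomial.X ^ 3 := by
  simp only [evalLine, binaryCubic, map_neg, map_add, map_mul, map_pow, aeval_C, aeval_X,
    Sum.elim_inr, Matrix.cons_val, Polynomial.algebraMap_eq]
  ring

theorem cube_ne_binaryCubic_mul_pow {a b a' b' : ℚ} (ha : a ≠ 0) (hb : b ≠ 0)
    (hdet : a * b' - b * a' ≠ 0) (j : ℕ) (f : BiRing n K) :
    f ^ 3 ≠ binaryCubic n K a b * binaryCubic n K a' b' ^ j := by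
  have hq : ∀ {x : ℚ}, x ≠ 0 → -algebraMap ℚ K x ≠ 0 := fun hx => by simpa using hx
  intro hf
  refine pow_ne_squarefree_mul_pow
    (squarefree_C_add_C_mul_X_pow_three (hq ha)) (not_isUnit_C_add_C_mul_X_pow_three (hq hb))
    (isCoprime_C_add_C_mul (a' := -algebraMap ℚ K a') (b' := -algebraMap ℚ K b') ?_
      (Polynomial.X ^ 3)).isRelPrime (by norm_num : 2 ≤ 3) j (evalLine n K f) ?_
  · rw [neg_mul_neg, neg_mul_neg, ← map_mul, ← map_mul, ← map_sub]
    exact (map_ne_zero _).2 hdet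
  · rw [← evalLine_binaryCubic, ← evalLine_binaryCubic, ← map_pow, ← map_pow, ← map_mul, hf]

variable {n} {c} {j₀ j₁ : Fin (n + 1)}

theorem IsAdapted.fibreCubic_left (h : IsAdapted c j₀ j₁) : fibreCubic n c K j₀ =
    X (Sum.inr 0) ^ 3 - binaryCubic n K (c 2 j₀) (c 3 j₀) := by
  simp only [fibreCubic, binaryCubic, Fin.sum_univ_four, h.c00, h.c10, map_one, map_zero]
  ring

theorem IsAdapted.fibreCubic_right (h : IsAdapted c j₀ j₁) : fibreCubic n c K j₁ =
    X (Sum.inr 1) ^ 3 - binaryCubic n K (c 2 j₁) (c 3 j₁) := by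
  simp only [fibreCubic, binaryCubic, Fin.sum_univ_four, h.c01, h.c11, map_one, map_zero]
  ring

theorem IsAdapted.cube_ne_binaryCubic_left (h : IsAdapted c j₀ j₁) (f : BiRing n K) :
    f ^ 3 ≠ binaryCubic n K (c 2 j₀) (c 3 j₀) := by
  simpa using cube_ne_binaryCubic_mul_pow n K h.c20 h.c30 h.det 0 f

theorem IsAdapted.prime_fibreCubic (h : IsAdapted c j₀ j₁) : Prime (fibreCubic n c K j₀) := by
  have hne : fibreCubic n c K j₀ ≠ 0 := fun h0 => h.cube_ne_binaryCubic_left K (X (Sum.inr 0))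
    (sub_eq_zero.1 (h.fibreCubic_left K ▸ h0))
  rw [← Ideal.span_singleton_prime hne, h.fibreCubic_left K]
  exact isPrime_span_X_pow_sub (Sum.inr_injective.ne (by decide : (0 : Fin 4) ≠ 1))
    (binaryCubic_mem_supported n K _ _)
    (prime_X_pow_sub_C Nat.prime_three (h.cube_ne_binaryCubic_left K))

theorem IsAdapted.isPrime_span_pencil (h : IsAdapted c j₀ j₁) :
    (Ideal.span {fibreCubic n c K j₀, fibreCubic n c K j₁}).IsPrime := by
  have h3 : (3 : BiRing n K) ≠ 0 := by
    rw [← map_ofNat (C : K →+* BiRing n K) 3]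
    exact (map_ne_zero_iff _ (C_injective _ _)).2 three_ne_zero
  rw [h.fibreCubic_left K, h.fibreCubic_right K]
  refine isPrime_span_X_pow_sub_pair (Sum.inr_injective.ne (by decide : (0 : Fin 4) ≠ 1))
    (binaryCubic_mem_supported n K _ _) (binaryCubic_mem_supported n K _ _)
    (prime_X_pow_three_sub_C_adjoinRoot h3 (h.cube_ne_binaryCubic_left K)
      (cube_ne_binaryCubic_mul_pow n K h.c21 h.c31 fun h0 => h.det ?_))
  linear_combination -h0

end FibreCubics

/-! ### Orders of vanishing -/

section LocalGenerator

theorem exists_mul_eq_mul_pow_of_mem {B : Type*} [CommRing B] [IsDomain B] [IsNoetherianRing B]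
    {q : Ideal B} [q.IsPrime] {π f : B} (hπ : π ∈ q) (hf : f ≠ 0) :
    ∃ m : ℕ, ∃ s ∉ q, ∃ t, s * f = t * π ^ m ∧ ∀ r ∉ q, ¬π ∣ r * t := by
  let L := Localization.AtPrime q
  have : IsDomain L := IsLocalization.isDomain_localization q.primeCompl_le_nonZeroDivisors
  have : IsNoetherianRing L := IsLocalization.isNoetherianRing q.primeCompl L inferInstance
  have hinj : Function.Injective (algebraMap B L) :=
    IsLocalization.injective L q.primeCompl_le_nonZeroDivisors
  have hunit : ∀ a ∉ q, IsUnit (algebraMap B L a) := fun a ha =>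
    IsLocalization.map_units L (⟨a, ha⟩ : q.primeCompl)
  have hπL : ¬IsUnit (algebraMap B L π) := fun hu =>
    (IsLocalization.AtPrime.isUnit_to_map_iff L q π).1 hu hπ
  obtain ⟨m, x, hx, hfx⟩ := WfDvdMonoid.max_power_factor'
    ((map_ne_zero_iff _ hinj).2 hf) hπL
  obtain ⟨t, ⟨s, hs⟩, rfl⟩ := IsLocalization.exists_mk'_eq q.primeCompl x
  have hst := IsLocalization.mk'_spec' L t (⟨s, hs⟩ : q.primeCompl)
  refine ⟨m, s, hs, t, hinj ?_, fun r hr hdvd => hx ?_⟩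
  · rw [map_mul, map_mul, map_pow, hfx, ← hst]
    ring
  · have := map_dvd (algebraMap B L) hdvd
    rwa [map_mul, ← hst, (hunit r hr).dvd_mul_left, (hunit s hs).dvd_mul_left] at this

variable {A : Type*} [CommRing A]

/-- `π` generates the maximal ideal of the local ring of `A ⧸ (P)` at `p`, and is nonzero there. -/
structure IsLocalGenerator (P : A) (p : Ideal A) (π : A) : Prop where
  mem : π ∈ p
  notMem : π ∉ Ideal.span {P}
  exists_mul_mem : ∀ a ∈ p, ∃ s ∉ p, s * a ∈ Ideal.span {π} ⊔ Ideal.span {P}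

variable {P π : A} {p : Ideal A} [hp : p.IsPrime]

theorem IsLocalGenerator.exists_mul_mem_pow (h : IsLocalGenerator P p π) (k : ℕ) :
    ∀ a ∈ p ^ k, ∃ s ∉ p, s * a ∈ Ideal.span {π ^ k} ⊔ Ideal.span {P} := by
  induction k with
  | zero => exact fun a _ => ⟨1, hp.one_notMem, by simp⟩
  | succ k ih =>
    intro a ha
    rw [pow_succ] at ha
    induction ha using Submodule.mul_induction_on' with
    | mem_mul_mem x hx y hy =>
      obtain ⟨s, hs, hsx⟩ := ih x hx
      obtain ⟨t, ht, hty⟩ := h.exists_mul_mem y hy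
      refine ⟨s * t, hp.mul_notMem hs ht, ?_⟩
      obtain ⟨x₁, hx₁, x₂, hx₂, hx₁₂⟩ := Submodule.mem_sup.1 hsx
      obtain ⟨y₁, hy₁, y₂, hy₂, hy₁₂⟩ := Submodule.mem_sup.1 hty
      rw [show s * t * (x * y) = x₁ * y₁ + (x₁ * y₂ + x₂ * (t * y)) by
        linear_combination (-(t * y)) * hx₁₂ - x₁ * hy₁₂]
      refine Submodule.add_mem_sup ?_ ?_
      · rw [pow_succ, ← Ideal.span_singleton_mul_span_singleton]
        exact Ideal.mul_mem_mul hx₁ hy₁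
      · exact add_mem (Ideal.mul_mem_left _ _ hy₂) (Ideal.mul_mem_right _ _ hx₂)
    | add x _ y _ hx hy =>
      obtain ⟨s, hs, hsx⟩ := hx
      obtain ⟨t, ht, hty⟩ := hy
      refine ⟨s * t, hp.mul_notMem hs ht, ?_⟩
      rw [show s * t * (x + y) = t * (s * x) + s * (t * y) by ring]
      exact add_mem (Ideal.mul_mem_left _ _ hsx) (Ideal.mul_mem_left _ _ hty)

theorem IsLocalGenerator.not_exists_mul_mem_pow (h : IsLocalGenerator P p π)
    (hP : (Ideal.span {P}).IsPrime) (hPp : P ∈ p) {f s t : A} {m k : ℕ} (ht : t ∉ p)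
    (hf : s * f - t * π ^ m ∈ Ideal.span {P}) (hmk : m < k) :
    ¬∃ s ∉ p, s * f ∈ p ^ k ⊔ Ideal.span {P} := by
  rintro ⟨s', hs', hk⟩
  obtain ⟨a, ha, b, hb, hab⟩ := Submodule.mem_sup.1 hk
  obtain ⟨u, hu, hua⟩ := h.exists_mul_mem_pow k a ha
  obtain ⟨y, hy, z, hz, hyz⟩ := Submodule.mem_sup.1 hua
  obtain ⟨r, rfl⟩ := Ideal.mem_span_singleton'.1 hy
  obtain ⟨e, rfl⟩ := Nat.exists_eq_add_of_lt hmk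
  have hmul : (u * s' * t - s * r * π ^ (e + 1)) * π ^ m ∈ Ideal.span {P} := by
    rw [show (u * s' * t - s * r * π ^ (e + 1)) * π ^ m =
        s * z + s * u * b - u * s' * (s * f - t * π ^ m) by
      linear_combination (-s) * hyz - s * u * hab]
    exact sub_mem (add_mem (Ideal.mul_mem_left _ _ hz) (Ideal.mul_mem_left _ _ hb))
      (Ideal.mul_mem_left _ _ hf)
  have hsub := (Ideal.span_singleton_le_iff_mem _).2 hPp <|
    (hP.mem_or_mem hmul).resolve_right fun hm => h.notMem (hP.mem_of_pow_mem _ hm)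
  refine hp.mul_notMem (hp.mul_notMem hu hs') ht ((Submodule.sub_mem_iff_left _ ?_).1 hsub)
  exact Ideal.mul_mem_left _ _ (Ideal.pow_mem_of_mem _ h.mem _ e.succ_pos)

theorem IsLocalGenerator.sSup_eq (h : IsLocalGenerator P p π) (hP : (Ideal.span {P}).IsPrime)
    (hPp : P ∈ p) {f s t : A} {m : ℕ} (hs : s ∉ p) (ht : t ∉ p)
    (hf : s * f - t * π ^ m ∈ Ideal.span {P}) :
    sSup {k : ℕ | ∃ s, s ∉ p ∧ s * f ∈ p ^ k ⊔ Ideal.span {P}} = m := by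
  refine IsGreatest.csSup_eq ⟨⟨s, hs, ?_⟩, fun k hk => ?_⟩
  · rw [← add_sub_cancel (t * π ^ m) (s * f)]
    exact Submodule.add_mem_sup (Ideal.mul_mem_left _ _ (Ideal.pow_mem_pow h.mem m)) hf
  · exact not_lt.1 fun hmk => h.not_exists_mul_mem_pow hP hPp ht hf hmk hk

theorem IsLocalGenerator.exists_eq_mul_pow [IsNoetherianRing A] (h : IsLocalGenerator P p π)
    (hP : (Ideal.span {P}).IsPrime) (hPp : P ∈ p) {f : A} (hf : f ∉ Ideal.span {P}) :
    ∃ m : ℕ, ∃ s ∉ p, ∃ t ∉ p, s * f - t * π ^ m ∈ Ideal.span {P} := by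
  let mk := Ideal.Quotient.mk (Ideal.span {P})
  have hmk : Function.Surjective mk := Ideal.Quotient.mk_surjective
  have hker : RingHom.ker mk ≤ p :=
    Ideal.mk_ker.le.trans ((Ideal.span_singleton_le_iff_mem _).2 hPp)
  have hmem : ∀ a, mk a ∈ p.map mk ↔ a ∈ p := fun a => by
    rw [← Ideal.mem_comap, Ideal.comap_map_of_surjective' _ hmk, sup_eq_left.2 hker]
  have : (p.map mk).IsPrime := Ideal.map_isPrime_of_surjective hmk hker
  obtain ⟨m, s, hs, t, hst, ht⟩ := exists_mul_eq_mul_pow_of_mem ((hmem π).2 h.mem)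
    (mt Ideal.Quotient.eq_zero_iff_mem.1 hf)
  obtain ⟨s, rfl⟩ := hmk s
  obtain ⟨t, rfl⟩ := hmk t
  refine ⟨m, s, (hmem s).not.1 hs, t, fun htp => ?_, ?_⟩
  · obtain ⟨r, hr, hrt⟩ := h.exists_mul_mem t htp
    refine ht (mk r) ((hmem r).not.2 hr) ?_
    have := Ideal.mem_map_of_mem mk hrt
    rwa [Ideal.map_sup, Ideal.map_quotient_self, sup_bot_eq, Ideal.map_span, Set.image_singleton,
      Ideal.mem_span_singleton, map_mul] at this
  · rwa [← Ideal.Quotient.eq, map_mul, map_mul, map_pow]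

theorem IsLocalGenerator.eq_of_lt [IsNoetherianRing A] (h : IsLocalGenerator P p π)
    (hP : (Ideal.span {P}).IsPrime) {q : Ideal A} (hq : q.IsPrime) (hPq : P ∈ q)
    (hqp : q < p) : q = Ideal.span {P} := by
  have hle : Ideal.span {P} ≤ q := (Ideal.span_singleton_le_iff_mem _).2 hPq
  have hπ : π ∉ q := fun hπ => hqp.not_ge fun a ha => by
    obtain ⟨s, hs, hsa⟩ := h.exists_mul_mem a ha
    refine (hq.mem_or_mem (sup_le ?_ hle hsa)).resolve_left fun hsq => hs (hqp.le hsq)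
    exact (Ideal.span_singleton_le_iff_mem _).2 hπ
  refine le_antisymm (fun f hf => ?_) hle
  by_contra hfP
  obtain ⟨m, s, -, t, ht, hst⟩ := h.exists_eq_mul_pow hP (hqp.le hPq) hfP
  have htπ : t * π ^ m ∈ q :=
    (Submodule.sub_mem_iff_right _ (Ideal.mul_mem_left _ _ hf)).1 (hle hst)
  exact (hq.mem_or_mem htπ).elim (fun htq => ht (hqp.le htq)) fun h1 => hπ (hq.mem_of_pow_mem _ h1)

end LocalGenerator

/-! ### Eliminating a variable from an equation linear in `x` -/

section Elimination

variable {n} {R : Type*} [CommRing R]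

/-- The substitution `x_k ↦ G x_k` for `k ≠ j`, `x_j ↦ G x_j - Q`, `y_i ↦ y_i`. If `G` is the
coefficient of `x_j` in the form `Q`, linear in `x`, it eliminates `x_j` from the equation
`Q = 0`. -/
def eliminate (j : Fin (n + 1)) (G Q : BiRing n R) : BiRing n R →ₐ[R] BiRing n R :=
  aeval (Sum.elim (fun k => G * X (Sum.inl k) - if k = j then Q else 0) fun i => X (Sum.inr i))

variable (j : Fin (n + 1)) (G Q : BiRing n R)

@[simp]
theorem eliminate_X_inl (k : Fin (n + 1)) : eliminate j G Q (X (Sum.inl k)) =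
    G * X (Sum.inl k) - if k = j then Q else 0 := by
  simp [eliminate]

@[simp]
theorem eliminate_X_inr (i : Fin 4) : eliminate j G Q (X (Sum.inr i)) = X (Sum.inr i) := by
  simp [eliminate]

theorem eliminate_zero_eq {f : BiRing n R} {d : ℕ × ℕ}
    (hf : f.IsWeightedHomogeneous (biWeight n) d) : eliminate j G 0 f = G ^ d.1 * f := by
  induction hf using IsWeightedHomogeneous.induction_on with
  | zero => simp
  | add p q _ _ hp hq => rw [map_add, hp, hq, mul_add]
  | monomial m r hr =>
    have hd : d.1 = ∑ k, m (Sum.inl k) := by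
      rw [← hr, Finsupp.weight_apply, Finsupp.sum_fintype _ _ (by simp)]
      simp [biWeight, Prod.fst_sum]
    rw [monomial_eq, Finsupp.prod_fintype _ _ (by simp), map_mul, map_prod]
    simp [Fintype.prod_sum_type, mul_pow, Finset.prod_mul_distrib, Finset.prod_pow_eq_pow_sum, hd,
      algHom_C]
    ring

theorem eliminate_sub_mem {f : BiRing n R} {d : ℕ × ℕ}
    (hf : f.IsWeightedHomogeneous (biWeight n) d) :
    eliminate j G Q f - G ^ d.1 * f ∈ Ideal.span {Q} := by
  have hQ : Ideal.Quotient.mkₐ R (Ideal.span {Q}) Q = 0 :=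
    Ideal.Quotient.eq_zero_iff_mem.2 (Ideal.mem_span_singleton_self Q)
  have hcomp : (Ideal.Quotient.mkₐ R (Ideal.span {Q})).comp (eliminate j G Q) =
      (Ideal.Quotient.mkₐ R (Ideal.span {Q})).comp (eliminate j G 0) := by
    refine algHom_ext fun i => ?_
    rcases i with k | i
    · simp only [AlgHom.comp_apply, eliminate_X_inl, map_sub, apply_ite (Ideal.Quotient.mkₐ R _),
        hQ, map_zero]
    · simp only [AlgHom.comp_apply, eliminate_X_inr]
  rw [← eliminate_zero_eq j G hf, ← Ideal.Quotient.eq]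
  exact DFunLike.congr_fun hcomp f

theorem eliminate_eq_of_mem_supported {f : BiRing n R} {d : ℕ × ℕ}
    (hf : f.IsWeightedHomogeneous (biWeight n) d) (hj : f ∈ supported R {Sum.inl j}ᶜ) :
    eliminate j G Q f = G ^ d.1 * f := by
  have heq : Set.EqOn (eliminate j G Q) (eliminate j G 0)
      (supported R ({Sum.inl j}ᶜ : Set (Fin (n + 1) ⊕ Fin 4))) := by
    rw [supported_eq_adjoin_X]
    refine AlgHom.eqOn_adjoin_iff.2 ?_
    rintro _ ⟨k | i, hk, rfl⟩
    · simp [show k ≠ j from fun h => hk (by simp [h])]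
    · simp
  exact (heq hj).trans (eliminate_zero_eq j G hf)

/-- The effect of `eliminate` on bidegrees. -/
def eliminateDegree (e : ℕ) : ℕ × ℕ →+ ℕ × ℕ where
  toFun d := (d.1, d.2 + e * d.1)
  map_zero' := by simp
  map_add' a b := by ext <;> simp; ring

theorem eliminateDegree_injective (e : ℕ) : Function.Injective (eliminateDegree e) := by
  rintro ⟨a, b⟩ ⟨a', b'⟩ h
  simp only [eliminateDegree, AddMonoidHom.coe_mk, ZeroHom.coe_mk, Prod.mk.injEq] at h
  obtain ⟨rfl, h⟩ := h
  exact Prod.ext rfl (add_right_cancel h)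

variable {G Q} {e : ℕ}

theorem isWeightedHomogeneous_eliminate_X (hG : G.IsWeightedHomogeneous (biWeight n) (0, e))
    (hQ : Q.IsWeightedHomogeneous (biWeight n) (1, e)) (i : Fin (n + 1) ⊕ Fin 4) :
    (eliminate j G Q (X i)).IsWeightedHomogeneous (biWeight n)
      (eliminateDegree e (biWeight n i)) := by
  rcases i with k | i
  · have hGX := hG.mul (isWeightedHomogeneous_X_inl n R k)
    rw [eliminate_X_inl, show eliminateDegree e (biWeight n (Sum.inl k)) = (1, e) by
      simp [eliminateDegree, biWeight]]
    refine (weightedHomogeneousSubmodule R (biWeight n) (1, e)).sub_mem (by simpa using hGX) ?_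
    split_ifs
    · exact hQ
    · exact zero_mem _
  · simpa [eliminateDegree, biWeight] using isWeightedHomogeneous_X_inr n R i

theorem comap_eliminate_eq (hG : G.IsWeightedHomogeneous (biWeight n) (0, e))
    (hQ : Q.IsWeightedHomogeneous (biWeight n) (1, e))
    {I J : Ideal (BiRing n R)} (hQI : Q ∈ I) (hJI : J ≤ I)
    (hI : I ≤ J.comap (eliminate j G Q)) (hGI : ∀ f, G * f ∈ I → f ∈ I)
    (hJ : ∀ f ∈ J, ∀ d, weightedHomogeneousComponent (biWeight n) d f ∈ J) :
    J.comap (eliminate j G Q) = I := by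
  refine le_antisymm (fun f hf => ?_) hI
  have hpow : ∀ (m : ℕ) f, G ^ m * f ∈ I → f ∈ I := fun m => by
    induction m with
    | zero => simp
    | succ m ih => exact fun f hf => ih _ (hGI _ (by rwa [← mul_assoc, ← pow_succ']))
  refine weightedHomogeneousComponent_induction (biWeight n) f I.zero_mem
    (fun _ _ => I.add_mem) fun d => hpow d.1 _ ?_
  have hsub := eliminate_sub_mem j G Q
    (weightedHomogeneousComponent_isWeightedHomogeneous (w := biWeight n) d f)
  rw [← weightedHomogeneousComponent_map_algHom (eliminateDegree_injective e)
    (isWeightedHomogeneous_eliminate_X j hG hQ)] at hsub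
  exact (Submodule.sub_mem_iff_right _ (hJI (hJ _ hf _))).1
    ((Ideal.span_singleton_le_iff_mem I).2 hQI hsub)

theorem mem_supported_compl_singleton_iff {σ : Type*} {i : σ} {f : MvPolynomial σ R} :
    f ∈ supported R {i}ᶜ ↔ f.degreeOf i = 0 := by
  rw [mem_supported, Set.subset_compl_singleton_iff, Finset.mem_coe, mem_vars_iff_degreeOf_ne_zero,
    not_not]

theorem mem_supported_compl_singleton_of_dvd [NoZeroDivisors R] {σ : Type*} {i : σ}
    {f g : MvPolynomial σ R} (hg : g ∈ supported R {i}ᶜ) (hg0 : g ≠ 0) (hfg : f ∣ g) :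
    f ∈ supported R {i}ᶜ := by
  obtain ⟨k, rfl⟩ := hfg
  rw [mem_supported_compl_singleton_iff, degreeOf_mul_eq (left_ne_zero_of_mul hg0)
    (right_ne_zero_of_mul hg0)] at hg
  exact mem_supported_compl_singleton_iff.2 (Nat.eq_zero_of_add_eq_zero hg).1

end Elimination

section SpanX

theorem isPrime_span_pair_X {σ R : Type*} [CommRing R] {i : σ} {f : MvPolynomial σ R}
    (hf : f ∈ supported R {i}ᶜ) (h : (Ideal.span {f}).IsPrime) :
    (Ideal.span {f, X i}).IsPrime := by
  classical
  let ε : MvPolynomial σ R →+* MvPolynomial σ R := eval₂Hom C (Function.update X i 0)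
  have hεi : ε (X i) = 0 := by simp [ε]
  have hε : ∀ k, k ≠ i → ε (X k) = X k := fun k hk => by simp [ε, hk]
  have hεf : ε f = f := by
    refine hom_congr_vars (f₂ := RingHom.id _) (by ext; simp [ε]) (fun k hk _ => ?_) rfl
    exact hε k (mem_supported.1 hf hk)
  have hcomp : (Ideal.Quotient.mk (Ideal.span {f, X i})).comp ε = Ideal.Quotient.mk _ := by
    refine MvPolynomial.ringHom_ext (fun r => by simp [ε]) fun k => ?_
    by_cases hk : k = i
    · rw [RingHom.comp_apply, hk, hεi, map_zero, eq_comm, Ideal.Quotient.eq_zero_iff_mem]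
      exact Ideal.subset_span (by simp)
    · rw [RingHom.comp_apply, hε k hk]
  have hmap : (Ideal.span {f, X i}).map ε = Ideal.span {f} := by
    rw [Ideal.map_span, Set.image_pair, hεf, hεi, Set.pair_comm, Ideal.span_insert_zero]
  rw [← comap_map_eq_of_comp_eq_mk hcomp, hmap]
  exact h.comap _

end SpanX

section Equation

theorem aeval_fibreCubic {B : Type*} [CommRing B] [Algebra K B] (x : Fin (n + 1) → B)
    (y : Fin 4 → B) (j : Fin (n + 1)) : aeval (Sum.elim x y) (fibreCubic n c K j) =
      ∑ i, algebraMap K B (algebraMap ℚ K (c i j)) * y i ^ 3 := by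
  simp [fibreCubic]

theorem aeval_cubicBundlePolyK {B : Type*} [CommRing B] [Algebra K B] (x : Fin (n + 1) → B)
    (y : Fin 4 → B) : aeval (Sum.elim x y) (cubicBundlePolyK n c K) =
      ∑ j, x j * ∑ i, algebraMap K B (algebraMap ℚ K (c i j)) * y i ^ 3 := by
  simp only [cubicBundlePolyK_eq_sum, map_sum, map_mul, aeval_X, Sum.elim_inl, aeval_fibreCubic]

theorem aeval_X_inr_fibreCubic (x : Fin (n + 1) → BiRing n K) (j : Fin (n + 1)) :
    aeval (Sum.elim x fun i => X (Sum.inr i)) (fibreCubic n c K j) = fibreCubic n c K j := by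
  rw [aeval_fibreCubic]
  rfl

theorem aeval_X_inr_cubicBundlePolyK (x : Fin (n + 1) → BiRing n K) :
    aeval (Sum.elim x fun i => X (Sum.inr i)) (cubicBundlePolyK n c K) =
      ∑ j, x j * fibreCubic n c K j := by
  rw [aeval_cubicBundlePolyK]
  rfl

theorem eliminate_fibreCubic (j k : Fin (n + 1)) (G Q : BiRing n K) :
    eliminate j G Q (fibreCubic n c K k) = fibreCubic n c K k :=
  aeval_X_inr_fibreCubic n c K _ k

theorem eliminate_cubicBundlePolyK (j : Fin (n + 1)) :
    eliminate j (fibreCubic n c K j) (cubicBundlePolyK n c K) (cubicBundlePolyK n c K) = 0 := by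
  refine (aeval_X_inr_cubicBundlePolyK n c K _).trans ?_
  simp only [sub_mul, ite_mul, zero_mul, Finset.sum_sub_distrib, Finset.sum_ite_eq',
    Finset.mem_univ, if_true, mul_assoc]
  rw [← Finset.mul_sum, ← cubicBundlePolyK_eq_sum, mul_comm, sub_self]

theorem X_inl_mem_supported (R : Type*) [CommSemiring R] {j k : Fin (n + 1)} (h : k ≠ j) :
    (X (Sum.inl k) : BiRing n R) ∈ supported R {Sum.inl j}ᶜ :=
  Algebra.subset_adjoin ⟨_, by simpa using h, rfl⟩

theorem X_inr_mem_supported (R : Type*) [CommSemiring R] (j : Fin (n + 1)) (i : Fin 4) :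
    (X (Sum.inr i) : BiRing n R) ∈ supported R {Sum.inl j}ᶜ :=
  Algebra.subset_adjoin ⟨_, by simp, rfl⟩

theorem fibreCubic_mem_supported (j k : Fin (n + 1)) :
    fibreCubic n c K k ∈ supported K {Sum.inl j}ᶜ :=
  sum_mem fun i _ => mul_mem (Subalgebra.algebraMap_mem _ _)
    (pow_mem (X_inr_mem_supported n K j i) 3)

theorem eliminate_mem_supported (j : Fin (n + 1)) (f : BiRing n K) :
    eliminate j (fibreCubic n c K j) (cubicBundlePolyK n c K) f ∈ supported K {Sum.inl j}ᶜ := by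
  suffices h : (eliminate j (fibreCubic n c K j) (cubicBundlePolyK n c K)).range ≤
      supported K {Sum.inl j}ᶜ from h ⟨f, rfl⟩
  rw [eliminate, ← Algebra.adjoin_range_eq_range_aeval, Algebra.adjoin_le_iff]
  rintro _ ⟨k | i, rfl⟩
  · by_cases hk : k = j
    · rw [Sum.elim_inl, if_pos hk, hk, cubicBundlePolyK_eq_sum,
        ← Finset.add_sum_erase _ _ (Finset.mem_univ j), mul_comm, sub_add_cancel_left]
      exact neg_mem (sum_mem fun l hl => mul_mem
        (X_inl_mem_supported n K (Finset.ne_of_mem_erase hl)) (fibreCubic_mem_supported n c K j l))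
    · rw [Sum.elim_inl, if_neg hk, sub_zero]
      exact mul_mem (fibreCubic_mem_supported n c K j j) (X_inl_mem_supported n K hk)
  · exact X_inr_mem_supported n K j i

/-- The specialisation `x = 0`, `y = T eᵢ`, where `eᵢ` is a coordinate point of `ℙ³`. -/
def evalAxis (R : Type*) [CommRing R] (i : Fin 4) : BiRing n R →ₐ[R] Polynomial R :=
  aeval (Sum.elim 0 (Pi.single i Polynomial.X))

theorem evalAxis_fibreCubic (i : Fin 4) (j : Fin (n + 1)) :
    evalAxis n K i (fibreCubic n c K j) =
      Polynomial.C (algebraMap ℚ K (c i j)) * Polynomial.X ^ 3 := by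
  rw [evalAxis, aeval_fibreCubic, Finset.sum_eq_single i (fun l _ hl => by simp [hl]) (by simp),
    Pi.single_eq_same, Polynomial.algebraMap_eq]

theorem coeff_zero_evalAxis (R : Type*) [CommRing R] (i : Fin 4) (f : BiRing n R) :
    (evalAxis n R i f).coeff 0 = constantCoeff f := by
  have hcomp : Polynomial.constantCoeff.comp (evalAxis n R i : BiRing n R →+* Polynomial R) =
      constantCoeff := by
    refine MvPolynomial.ringHom_ext (fun r => by simp [evalAxis]) fun k => ?_
    rcases k with k | k
    · simp [evalAxis]
    · obtain rfl | hk := eq_or_ne k i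
      · simp [evalAxis]
      · simp [evalAxis, hk]
  exact DFunLike.congr_fun hcomp f

theorem exists_eq_of_fibreCubic_mem_span_pair {j k l : Fin (n + 1)}
    (h : fibreCubic n c K l ∈ Ideal.span {fibreCubic n c K j, fibreCubic n c K k}) :
    ∃ a b : K, ∀ i, algebraMap ℚ K (c i l) = a * algebraMap ℚ K (c i j) +
      b * algebraMap ℚ K (c i k) := by
  obtain ⟨a, b, hab⟩ := Ideal.mem_span_pair.1 h
  refine ⟨constantCoeff a, constantCoeff b, fun i => ?_⟩
  have hcoeff := congrArg (fun f => (evalAxis n K i f).coeff 3) hab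
  simp only [map_add, map_mul, evalAxis_fibreCubic, ← mul_assoc, Polynomial.coeff_add,
    Polynomial.coeff_mul_X_pow', le_refl, if_true, Nat.sub_self, Polynomial.coeff_mul_C,
    Polynomial.coeff_C_zero, coeff_zero_evalAxis] at hcoeff
  exact hcoeff.symm

theorem fibreCubic_mem_span_of_cubicBundlePolyK_mem {s : Set (Fin (n + 1))} (j : Fin (n + 1))
    (h : cubicBundlePolyK n c K ∈ Ideal.span (fibreCubic n c K '' s)) :
    fibreCubic n c K j ∈ Ideal.span (fibreCubic n c K '' s) := by
  let ε : BiRing n K →ₐ[K] BiRing n K := aeval (Sum.elim (Pi.single j 1) fun i => X (Sum.inr i))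
  have hε := Ideal.mem_map_of_mem ε h
  rw [aeval_X_inr_cubicBundlePolyK, Finset.sum_eq_single j (fun b _ hb => by simp [hb]) (by simp),
    Pi.single_eq_same, one_mul, Ideal.map_span, Set.image_image] at hε
  simpa only [ε, aeval_X_inr_fibreCubic] using hε

variable {n} {c} {j₀ j₁ : Fin (n + 1)}

theorem IsAdapted.not_fibreCubic_dvd_fibreCubic (h : IsAdapted c j₀ j₁) :
    ¬fibreCubic n c K j₀ ∣ fibreCubic n c K j₁ := fun hd => by
  have := map_dvd (evalAxis n K 1) hd
  rw [evalAxis_fibreCubic, evalAxis_fibreCubic, h.c10, h.c11] at this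
  simp at this

theorem IsAdapted.not_fibreCubic_dvd_cubicBundlePolyK (h : IsAdapted c j₀ j₁) :
    ¬fibreCubic n c K j₀ ∣ cubicBundlePolyK n c K := fun hd => by
  rw [← Ideal.mem_span_singleton, ← Set.image_singleton] at hd
  have := fibreCubic_mem_span_of_cubicBundlePolyK_mem n c K j₁ hd
  rw [Set.image_singleton, Ideal.mem_span_singleton] at this
  exact h.not_fibreCubic_dvd_fibreCubic K this

theorem IsAdapted.comap_eliminate_bot (h : IsAdapted c j₀ j₁) :
    (⊥ : Ideal _).comap (eliminate j₀ (fibreCubic n c K j₀) (cubicBundlePolyK n c K)) =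
      Ideal.span {cubicBundlePolyK n c K} := by
  refine comap_eliminate_eq j₀ (isWeightedHomogeneous_fibreCubic n c K j₀)
    (isWeightedHomogeneous_cubicBundlePolyK n c K) (Ideal.mem_span_singleton_self _) bot_le ?_ ?_
    (by simp)
  · rw [Ideal.span_singleton_le_iff_mem, Ideal.mem_comap, eliminate_cubicBundlePolyK]
    exact Ideal.zero_mem _
  · intro f hf
    obtain ⟨k, hk⟩ := Ideal.mem_span_singleton'.1 hf
    have hF := h.prime_fibreCubic K
    obtain ⟨k, rfl⟩ := (hF.dvd_or_dvd ⟨f, hk⟩).resolve_right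
      (h.not_fibreCubic_dvd_cubicBundlePolyK K)
    exact Ideal.mem_span_singleton'.2 ⟨k, mul_left_cancel₀ hF.ne_zero (by rw [← hk, mul_assoc])⟩

theorem IsAdapted.eliminate_eq_zero_iff (h : IsAdapted c j₀ j₁) {f : BiRing n K} :
    eliminate j₀ (fibreCubic n c K j₀) (cubicBundlePolyK n c K) f = 0 ↔
      f ∈ Ideal.span {cubicBundlePolyK n c K} := by
  rw [← h.comap_eliminate_bot K, Ideal.mem_comap, Ideal.mem_bot]

theorem IsAdapted.isPrime_span_cubicBundlePolyK (h : IsAdapted c j₀ j₁) :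
    (Ideal.span {cubicBundlePolyK n c K}).IsPrime := by
  rw [← h.comap_eliminate_bot K]
  exact Ideal.isPrime_bot.comap _

theorem IsAdapted.notMem_span_of_mem_supported (h : IsAdapted c j₀ j₁)
    {f : BiRing n K} {d : ℕ × ℕ} (hf : f.IsWeightedHomogeneous (biWeight n) d)
    (hj : f ∈ supported K {Sum.inl j₀}ᶜ) (hf0 : f ≠ 0) :
    f ∉ Ideal.span {cubicBundlePolyK n c K} := by
  rw [← h.eliminate_eq_zero_iff K, eliminate_eq_of_mem_supported j₀ _ _ hf hj]
  exact mul_ne_zero (pow_ne_zero _ (h.prime_fibreCubic K).ne_zero) hf0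

theorem IsAdapted.cubicBundlePolyK_notMem_span_pencil (h : IsAdapted c j₀ j₁) {j₂ : Fin (n + 1)}
    (h0 : c 0 j₂ = 0) (h1 : c 1 j₂ = 0) (h2 : c 2 j₂ ≠ 0 ∨ c 3 j₂ ≠ 0) :
    cubicBundlePolyK n c K ∉ Ideal.span {fibreCubic n c K j₀, fibreCubic n c K j₁} := fun hm => by
  rw [← Set.image_pair] at hm
  have hm₂ := fibreCubic_mem_span_of_cubicBundlePolyK_mem n c K j₂ hm
  rw [Set.image_pair] at hm₂
  obtain ⟨a, b, hab⟩ := exists_eq_of_fibreCubic_mem_span_pair n c K hm₂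
  have ha : a = 0 := by simpa [h0, h.c00, h.c01] using (hab 0).symm
  have hb : b = 0 := by simpa [h1, h.c10, h.c11] using (hab 1).symm
  exact h2.elim (· (by simpa [ha, hb] using hab 2)) (· (by simpa [ha, hb] using hab 3))

theorem IsAdapted.mem_span_pair_of_fibreCubic_mul_mem (h : IsAdapted c j₀ j₁) {j₂ : Fin (n + 1)}
    (h0 : c 0 j₂ = 0) (h1 : c 1 j₂ = 0) (h2 : c 2 j₂ ≠ 0 ∨ c 3 j₂ ≠ 0) {f : BiRing n K}
    (hf : fibreCubic n c K j₁ * f ∈ Ideal.span {fibreCubic n c K j₀, cubicBundlePolyK n c K}) :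
    f ∈ Ideal.span {fibreCubic n c K j₀, cubicBundlePolyK n c K} := by
  obtain ⟨a, b, hab⟩ := Ideal.mem_span_pair.1 hf
  have hb : b * cubicBundlePolyK n c K ∈ Ideal.span {fibreCubic n c K j₀, fibreCubic n c K j₁} :=
    Ideal.mem_span_pair.2 ⟨-a, f, by linear_combination -hab⟩
  obtain ⟨b₀, b₁, rfl⟩ := Ideal.mem_span_pair.1 <| ((h.isPrime_span_pencil K).mem_or_mem
    hb).resolve_right (h.cubicBundlePolyK_notMem_span_pencil K h0 h1 h2)
  obtain ⟨k, hk⟩ := ((h.prime_fibreCubic K).dvd_or_dvd (a := fibreCubic n c K j₁)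
    (b := f - b₁ * cubicBundlePolyK n c K) ⟨a + b₀ * cubicBundlePolyK n c K,
      by linear_combination -hab⟩).resolve_left (h.not_fibreCubic_dvd_fibreCubic K)
  exact Ideal.mem_span_pair.2 ⟨k, b₁, by linear_combination -hk⟩

theorem IsAdapted.isPrime_span_pair (h : IsAdapted c j₀ j₁) {j₂ : Fin (n + 1)}
    (h0 : c 0 j₂ = 0) (h1 : c 1 j₂ = 0) (h2 : c 2 j₂ ≠ 0 ∨ c 3 j₂ ≠ 0) :
    (Ideal.span {fibreCubic n c K j₀, cubicBundlePolyK n c K}).IsPrime := by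
  have hF := h.prime_fibreCubic K
  rw [← comap_eliminate_eq j₁ (isWeightedHomogeneous_fibreCubic n c K j₁)
    (isWeightedHomogeneous_cubicBundlePolyK n c K) (J := Ideal.span {fibreCubic n c K j₀})
    (I := Ideal.span {fibreCubic n c K j₀, cubicBundlePolyK n c K}) (Ideal.subset_span (by simp))
    (Ideal.span_mono (by simp)) ?_
    (fun f => h.mem_span_pair_of_fibreCubic_mul_mem K h0 h1 h2) ?_]
  · exact ((Ideal.span_singleton_prime hF.ne_zero).2 hF).comap _
  · rw [Ideal.span_le]
    rintro x (rfl | rfl)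
    · simp [eliminate_fibreCubic]
    · simp [eliminate_cubicBundlePolyK]
  · exact fun f hf d => weightedHomogeneousComponent_mem_span
      (by rintro _ rfl; exact ⟨_, isWeightedHomogeneous_fibreCubic n c K j₀⟩) hf d

theorem IsAdapted.isPrime_span_fibreCubic_X (h : IsAdapted c j₀ j₁) :
    (Ideal.span {fibreCubic n c K j₀, X (Sum.inl j₁)}).IsPrime := by
  have hF := h.prime_fibreCubic K
  exact isPrime_span_pair_X (fibreCubic_mem_supported n c K j₁ j₀)
    ((Ideal.span_singleton_prime hF.ne_zero).2 hF)

end Equation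

/-! ### Prime divisors away from a fibre cubic -/

section PrimeDivisors

variable {n} {c} {K} {j₀ j₁ : Fin (n + 1)}

theorem IsLocalGenerator.isPrimeDivisor {p : Ideal (BiRing n K)} {π : BiRing n K}
    (h : IsLocalGenerator (cubicBundlePolyK n c K) p π)
    (hP : (Ideal.span {cubicBundlePolyK n c K}).IsPrime) (hp : p.IsPrime)
    (mem : cubicBundlePolyK n c K ∈ p)
    (bihom : ∀ f ∈ p, ∀ d : ℕ × ℕ, weightedHomogeneousComponent (biWeight n) d f ∈ p)
    (relevant_x : ∃ j : Fin (n + 1), X (Sum.inl j) ∉ p)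
    (relevant_y : ∃ i : Fin 4, X (Sum.inr i) ∉ p) : IsPrimeDivisor n c K p where
  prime := hp
  bihom := bihom
  relevant_x := relevant_x
  relevant_y := relevant_y
  mem := mem
  exists_lt := ⟨_, hP, Ideal.mem_span_singleton_self _,
    lt_of_le_of_ne ((Ideal.span_singleton_le_iff_mem _).2 mem) fun e => h.notMem (e ▸ h.mem)⟩
  height_one q hq hPq hqp r hr hPr hrq := by
    rw [h.eq_of_lt hP hq hPq hqp, h.eq_of_lt hP hr hPr (hrq.trans_lt hqp)]

theorem IsPrimeDivisor.span_le {p : Ideal (BiRing n K)} (hp : IsPrimeDivisor n c K p) :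
    Ideal.span {cubicBundlePolyK n c K} ≤ p :=
  (Ideal.span_singleton_le_iff_mem _).2 hp.mem

theorem IsPrimeDivisor.eq_of_le {p q : Ideal (BiRing n K)} (hp : IsPrimeDivisor n c K p)
    (hP : (Ideal.span {cubicBundlePolyK n c K}).IsPrime) (hq : q.IsPrime)
    (hPq : cubicBundlePolyK n c K ∈ q) {f : BiRing n K} (hfq : f ∈ q)
    (hfP : f ∉ Ideal.span {cubicBundlePolyK n c K}) (hqp : q ≤ p) : p = q := by
  by_contra hne
  refine hfP ?_
  rwa [hp.height_one q hq hPq (lt_of_le_of_ne hqp (Ne.symm hne)) _ hP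
    (Ideal.mem_span_singleton_self _) ((Ideal.span_singleton_le_iff_mem _).2 hPq)]

theorem IsPrimeDivisor.exists_isWeightedHomogeneous_mem {p : Ideal (BiRing n K)}
    (hp : IsPrimeDivisor n c K p) :
    ∃ f d, f.IsWeightedHomogeneous (biWeight n) d ∧ f ∈ p ∧
      f ∉ Ideal.span {cubicBundlePolyK n c K} := by
  obtain ⟨q, -, hPq, hqp⟩ := hp.exists_lt
  obtain ⟨g, hgp, hgq⟩ := Set.exists_of_ssubset hqp
  obtain ⟨d, hd⟩ := exists_weightedHomogeneousComponent_notMem (biWeight n)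
    fun hg => hgq ((Ideal.span_singleton_le_iff_mem _).2 hPq hg)
  exact ⟨_, d, weightedHomogeneousComponent_isWeightedHomogeneous _ _, hp.bihom g hgp d, hd⟩

theorem ordAt_congr (p : PrimeDivisor n c K) {f g : BiRing n K}
    (hfg : f - g ∈ Ideal.span {cubicBundlePolyK n c K}) : ordAt n c K p f = ordAt n c K p g := by
  have hiff (m : ℕ) (s : BiRing n K) : s * f ∈ p.1 ^ m ⊔ Ideal.span {cubicBundlePolyK n c K} ↔
      s * g ∈ p.1 ^ m ⊔ Ideal.span {cubicBundlePolyK n c K} := by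
    rw [show s * f = s * (f - g) + s * g by ring]
    exact Ideal.add_mem_iff_right _ (Ideal.mem_sup_right (Ideal.mul_mem_left _ _ hfg))
  simp only [ordAt, hiff]

section LocalGenerator

variable {p : PrimeDivisor n c K} {π f g : BiRing n K}

theorem IsLocalGenerator.ordAt_eq (h : IsLocalGenerator (cubicBundlePolyK n c K) p.1 π)
    (hP : (Ideal.span {cubicBundlePolyK n c K}).IsPrime)
    {s t : BiRing n K} {m : ℕ} (hs : s ∉ p.1) (ht : t ∉ p.1)
    (hf : s * f - t * π ^ m ∈ Ideal.span {cubicBundlePolyK n c K}) : ordAt n c K p f = m :=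
  have := p.2.prime
  h.sSup_eq hP p.2.mem hs ht hf

theorem IsLocalGenerator.ordAt_self (h : IsLocalGenerator (cubicBundlePolyK n c K) p.1 π)
    (hP : (Ideal.span {cubicBundlePolyK n c K}).IsPrime) : ordAt n c K p π = 1 :=
  h.ordAt_eq hP p.2.prime.one_notMem p.2.prime.one_notMem (by simp)

theorem IsLocalGenerator.ordAt_eq_zero_iff
    (h : IsLocalGenerator (cubicBundlePolyK n c K) p.1 π)
    (hP : (Ideal.span {cubicBundlePolyK n c K}).IsPrime)
    (hf : f ∉ Ideal.span {cubicBundlePolyK n c K}) : ordAt n c K p f = 0 ↔ f ∉ p.1 := by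
  have := p.2.prime
  refine ⟨fun h0 hfp => ?_, fun hfp => h.ordAt_eq hP this.one_notMem hfp (by simp)⟩
  obtain ⟨m, s, hs, t, ht, hst⟩ := h.exists_eq_mul_pow hP p.2.mem hf
  obtain rfl : m = 0 := h0 ▸ (h.ordAt_eq hP hs ht hst).symm
  rw [pow_zero, mul_one] at hst
  exact ht ((Submodule.sub_mem_iff_right _ (Ideal.mul_mem_left _ _ hfp)).1 (p.2.span_le hst))

theorem IsLocalGenerator.ordAt_mul (h : IsLocalGenerator (cubicBundlePolyK n c K) p.1 π)
    (hP : (Ideal.span {cubicBundlePolyK n c K}).IsPrime)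
    (hf : f ∉ Ideal.span {cubicBundlePolyK n c K})
    (hg : g ∉ Ideal.span {cubicBundlePolyK n c K}) :
    ordAt n c K p (f * g) = ordAt n c K p f + ordAt n c K p g := by
  have hp := p.2.prime
  obtain ⟨m, s, hs, t, ht, hst⟩ := h.exists_eq_mul_pow hP p.2.mem hf
  obtain ⟨m', s', hs', t', ht', hst'⟩ := h.exists_eq_mul_pow hP p.2.mem hg
  rw [h.ordAt_eq hP hs ht hst, h.ordAt_eq hP hs' ht' hst']
  refine h.ordAt_eq hP (s := s * s') (t := t * t') (hp.mul_notMem hs hs')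
    (hp.mul_notMem ht ht') ?_
  rw [show s * s' * (f * g) - t * t' * π ^ (m + m') = s' * g * (s * f - t * π ^ m) +
    t * π ^ m * (s' * g - t' * π ^ m') by ring]
  exact add_mem (Ideal.mul_mem_left _ _ hst) (Ideal.mul_mem_left _ _ hst')

end LocalGenerator

/-- The divisor of `X` cut out by a prime form `ϖ` not involving `x_{j₀}`, away from the locus
where the coefficient `fibreCubic n c K j₀` of `x_{j₀}` vanishes. -/
def pivotDivisor (c : Fin 4 → Fin (n + 1) → ℚ) (j₀ : Fin (n + 1)) (ϖ : BiRing n K) :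
    Ideal (BiRing n K) :=
  (Ideal.span {ϖ}).comap (eliminate j₀ (fibreCubic n c K j₀) (cubicBundlePolyK n c K))

/-- Prime forms not involving `x_{j₀}` whose divisor in `ℙⁿ⁻¹ × ℙ³` is the image of a divisor
of `X` under the projection forgetting `x_{j₀}`. -/
structure IsPivotForm (c : Fin 4 → Fin (n + 1) → ℚ) (j₀ : Fin (n + 1)) (ϖ : BiRing n K) :
    Prop where
  prime : Prime ϖ
  homogeneous : ∃ d, ϖ.IsWeightedHomogeneous (biWeight n) d
  mem_supported : ϖ ∈ supported K {Sum.inl j₀}ᶜ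
  not_dvd : ¬ϖ ∣ fibreCubic n c K j₀
  relevant : ∃ j, j ≠ j₀ ∧ ¬ϖ ∣ X (Sum.inl j)

variable {f ϖ : BiRing n K} {p : Ideal (BiRing n K)}

theorem mem_pivotDivisor : f ∈ pivotDivisor c j₀ ϖ ↔
    ϖ ∣ eliminate j₀ (fibreCubic n c K j₀) (cubicBundlePolyK n c K) f := by
  rw [pivotDivisor, Ideal.mem_comap, Ideal.mem_span_singleton]

theorem IsPivotForm.mem_pivotDivisor_iff (hϖ : IsPivotForm c j₀ ϖ) {d : ℕ × ℕ}
    (hf : f.IsWeightedHomogeneous (biWeight n) d) (hj : f ∈ supported K {Sum.inl j₀}ᶜ) :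
    f ∈ pivotDivisor c j₀ ϖ ↔ ϖ ∣ f := by
  rw [mem_pivotDivisor, eliminate_eq_of_mem_supported _ _ _ hf hj]
  exact ⟨fun h => (hϖ.prime.dvd_or_dvd h).resolve_left fun h1 =>
    hϖ.not_dvd (hϖ.prime.dvd_of_dvd_pow h1), fun h => h.mul_left _⟩

theorem weightedHomogeneousComponent_mem_pivotDivisor
    (hϖ : ∃ d, ϖ.IsWeightedHomogeneous (biWeight n) d) (hf : f ∈ pivotDivisor c j₀ ϖ)
    (d : ℕ × ℕ) : weightedHomogeneousComponent (biWeight n) d f ∈ pivotDivisor c j₀ ϖ := by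
  rw [pivotDivisor, Ideal.mem_comap, ← weightedHomogeneousComponent_map_algHom
    (eliminateDegree_injective 3) (isWeightedHomogeneous_eliminate_X j₀
    (isWeightedHomogeneous_fibreCubic n c K j₀) (isWeightedHomogeneous_cubicBundlePolyK n c K))]
  exact weightedHomogeneousComponent_mem_span (by rintro _ rfl; exact hϖ) hf _

theorem exists_pow_mul_mem_of_mem_pivotDivisor (hϖ : ∃ d, ϖ.IsWeightedHomogeneous (biWeight n) d)
    (hf : f ∈ pivotDivisor c j₀ ϖ) :
    ∃ m, fibreCubic n c K j₀ ^ m * f ∈ Ideal.span {ϖ} ⊔ Ideal.span {cubicBundlePolyK n c K} := by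
  refine weightedHomogeneousComponent_induction (biWeight n) (motive := fun f => ∃ m,
    fibreCubic n c K j₀ ^ m * f ∈ Ideal.span {ϖ} ⊔ Ideal.span {cubicBundlePolyK n c K}) f
    ⟨0, by simp⟩ ?_ fun d => ⟨d.1, ?_⟩
  · rintro a b ⟨k, hk⟩ ⟨l, hl⟩
    refine ⟨k + l, ?_⟩
    rw [show fibreCubic n c K j₀ ^ (k + l) * (a + b) = fibreCubic n c K j₀ ^ l *
      (fibreCubic n c K j₀ ^ k * a) + fibreCubic n c K j₀ ^ k * (fibreCubic n c K j₀ ^ l * b) by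
      ring]
    exact add_mem (Ideal.mul_mem_left _ _ hk) (Ideal.mul_mem_left _ _ hl)
  · have hsub := eliminate_sub_mem j₀ (fibreCubic n c K j₀) (cubicBundlePolyK n c K)
      (weightedHomogeneousComponent_isWeightedHomogeneous (w := biWeight n) d f)
    have hmem : eliminate j₀ (fibreCubic n c K j₀) (cubicBundlePolyK n c K)
        (weightedHomogeneousComponent (biWeight n) d f) ∈ Ideal.span {ϖ} :=
      weightedHomogeneousComponent_mem_pivotDivisor hϖ hf d
    exact (Submodule.sub_mem_iff_right _ (Ideal.mem_sup_left hmem)).1 (Ideal.mem_sup_right hsub)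

theorem IsPivotForm.isPrime (hϖ : IsPivotForm c j₀ ϖ) : (pivotDivisor c j₀ ϖ).IsPrime :=
  ((Ideal.span_singleton_prime hϖ.prime.ne_zero).2 hϖ.prime).comap _

theorem IsPivotForm.isLocalGenerator (hϖ : IsPivotForm c j₀ ϖ) (h : IsAdapted c j₀ j₁) :
    IsLocalGenerator (cubicBundlePolyK n c K) (pivotDivisor c j₀ ϖ) ϖ := by
  obtain ⟨d, hd⟩ := hϖ.homogeneous
  refine ⟨(hϖ.mem_pivotDivisor_iff hd hϖ.mem_supported).2 dvd_rfl,
    h.notMem_span_of_mem_supported K hd hϖ.mem_supported hϖ.prime.ne_zero, fun a ha => ?_⟩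
  obtain ⟨m, hm⟩ := exists_pow_mul_mem_of_mem_pivotDivisor hϖ.homogeneous ha
  refine ⟨_, fun hF => hϖ.not_dvd ?_, hm⟩
  exact (hϖ.mem_pivotDivisor_iff (isWeightedHomogeneous_fibreCubic n c K j₀)
    (fibreCubic_mem_supported n c K j₀ j₀)).1 (hϖ.isPrime.mem_of_pow_mem _ hF)

theorem not_dvd_X_of_prime_of_dvd_X {σ R : Type*} [CommRing R] [IsDomain R] {i j : σ}
    (hij : i ≠ j) {q : MvPolynomial σ R} (hq : Prime q) (hi : q ∣ X i) : ¬q ∣ X j := fun hj =>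
  hij <| ((X_dvd_X.1 <|
    (hq.irreducible.associated_of_dvd X_prime.irreducible hi).symm.dvd.trans hj))

theorem IsPivotForm.isPrimeDivisor (hϖ : IsPivotForm c j₀ ϖ) (h : IsAdapted c j₀ j₁) :
    IsPrimeDivisor n c K (pivotDivisor c j₀ ϖ) := by
  refine (hϖ.isLocalGenerator h).isPrimeDivisor (h.isPrime_span_cubicBundlePolyK K) hϖ.isPrime ?_
    (fun f hf d => weightedHomogeneousComponent_mem_pivotDivisor hϖ.homogeneous hf d) ?_ ?_
  · rw [mem_pivotDivisor, eliminate_cubicBundlePolyK]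
    exact dvd_zero _
  · obtain ⟨j, hj, hd⟩ := hϖ.relevant
    exact ⟨j, fun hm => hd ((hϖ.mem_pivotDivisor_iff (isWeightedHomogeneous_X_inl n K j)
      (X_inl_mem_supported n K hj)).1 hm)⟩
  · by_contra! hall
    have hy : ∀ i : Fin 4, ϖ ∣ X (Sum.inr i) := fun i =>
      (hϖ.mem_pivotDivisor_iff (isWeightedHomogeneous_X_inr n K i)
        (X_inr_mem_supported n K j₀ i)).1 (hall i)
    exact not_dvd_X_of_prime_of_dvd_X (by simp) hϖ.prime (hy 0) (hy 1)

theorem IsPrimeDivisor.exists_X_inl_notMem (hp : IsPrimeDivisor n c K p)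
    (hF : fibreCubic n c K j₀ ∉ p) : ∃ j, j ≠ j₀ ∧ X (Sum.inl j) ∉ p := by
  by_contra! hall
  have hP := hp.mem
  rw [cubicBundlePolyK_eq_sum, ← Finset.add_sum_erase _ _ (Finset.mem_univ j₀),
    Ideal.add_mem_iff_left _
      (sum_mem fun j hj => p.mul_mem_right _ (hall j (Finset.ne_of_mem_erase hj)))] at hP
  obtain ⟨k, hk⟩ := hp.relevant_x
  obtain rfl : k = j₀ := by_contra fun hne => hk (hall k hne)
  exact (hp.prime.mem_or_mem hP).elim hk hF

theorem IsPrimeDivisor.exists_prime_form_mem (hp : IsPrimeDivisor n c K p)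
    (h : IsAdapted c j₀ j₁) : ∃ ϖ ∈ p, Prime ϖ ∧ ϖ ∈ supported K {Sum.inl j₀}ᶜ ∧
      ∃ d, ϖ.IsWeightedHomogeneous (biWeight n) d := by
  obtain ⟨f, d, hfd, hfp, hfP⟩ := hp.exists_isWeightedHomogeneous_mem
  set f' := eliminate j₀ (fibreCubic n c K j₀) (cubicBundlePolyK n c K) f
  have hf'0 : f' ≠ 0 := mt (h.eliminate_eq_zero_iff K).1 hfP
  have hf'd : f'.IsWeightedHomogeneous (biWeight n) (eliminateDegree 3 d) :=
    isWeightedHomogeneous_map_algHom _ (isWeightedHomogeneous_eliminate_X j₀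
      (isWeightedHomogeneous_fibreCubic n c K j₀)
      (isWeightedHomogeneous_cubicBundlePolyK n c K)) hfd
  have hf'p : f' ∈ p := (Submodule.sub_mem_iff_left _ (p.mul_mem_left _ hfp)).1 <|
    hp.span_le (eliminate_sub_mem j₀ (fibreCubic n c K j₀) _ hfd)
  obtain ⟨s, hs, hsf'⟩ := UniqueFactorizationMonoid.exists_prime_factors f' hf'0
  have hsp : s.prod ∈ p := p.mem_of_dvd hsf'.symm.dvd hf'p
  obtain ⟨ϖ, hϖs, hϖp⟩ := (hp.prime.multiset_prod_mem_iff_exists_mem s).1 hsp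
  have hϖf' : ϖ ∣ f' := (Multiset.dvd_prod hϖs).trans hsf'.dvd
  refine ⟨ϖ, hϖp, hs ϖ hϖs, mem_supported_compl_singleton_of_dvd
    (eliminate_mem_supported n c K j₀ f) hf'0 hϖf', ?_⟩
  obtain ⟨k, hk⟩ := hϖf'
  exact exists_isWeightedHomogeneous_of_mul (hk ▸ hf'd) (hk ▸ hf'0)

theorem IsPrimeDivisor.eq_pivotDivisor (hp : IsPrimeDivisor n c K p) (h : IsAdapted c j₀ j₁)
    (hϖ : IsPivotForm c j₀ ϖ) (hϖp : ϖ ∈ p) (hF : fibreCubic n c K j₀ ∉ p) :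
    p = pivotDivisor c j₀ ϖ := by
  have hgen := hϖ.isLocalGenerator h
  refine hp.eq_of_le (h.isPrime_span_cubicBundlePolyK K) hϖ.isPrime (hϖ.isPrimeDivisor h).mem
    hgen.mem hgen.notMem fun a ha => ?_
  obtain ⟨m, hm⟩ := exists_pow_mul_mem_of_mem_pivotDivisor hϖ.homogeneous ha
  refine (hp.prime.mem_or_mem (sup_le ?_ hp.span_le hm)).resolve_left
    (mt (hp.prime.mem_of_pow_mem _) hF)
  exact (Ideal.span_singleton_le_iff_mem _).2 hϖp

theorem IsPrimeDivisor.exists_pivotForm (hp : IsPrimeDivisor n c K p) (h : IsAdapted c j₀ j₁)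
    (hF : fibreCubic n c K j₀ ∉ p) : ∃ ϖ, IsPivotForm c j₀ ϖ ∧ p = pivotDivisor c j₀ ϖ := by
  obtain ⟨ϖ, hϖp, hϖ, hsupp, hhom⟩ := hp.exists_prime_form_mem h
  obtain ⟨j, hj, hjp⟩ := hp.exists_X_inl_notMem hF
  have hpiv : IsPivotForm c j₀ ϖ := ⟨hϖ, hhom, hsupp, fun hd => hF (p.mem_of_dvd hd hϖp),
    j, hj, fun hd => hjp (p.mem_of_dvd hd hϖp)⟩
  exact ⟨ϖ, hpiv, hp.eq_pivotDivisor h hpiv hϖp hF⟩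

end PrimeDivisors

/-! ### Prime divisors on a fibre cubic -/

section SpanPair

theorem notMem_span_pair_of_map {A B F : Type*} [CommRing A] [CommRing B] [FunLike F A B]
    [RingHomClass F A B] (φ : F) {f g a : A} (hf : φ f = 0) (hg : φ g = 0) (ha : φ a ≠ 0) :
    a ∉ Ideal.span {f, g} := fun hm => by
  obtain ⟨u, v, rfl⟩ := Ideal.mem_span_pair.1 hm
  simp [hf, hg] at ha

theorem weightedHomogeneousComponent_mem_span_pair {σ R M : Type*} [CommRing R] [AddCommMonoid M]
    {w : σ → M} {f g a : MvPolynomial σ R} {d e : M}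
    (hf : f.IsWeightedHomogeneous w d) (hg : g.IsWeightedHomogeneous w e)
    (ha : a ∈ Ideal.span {f, g}) (m : M) :
    weightedHomogeneousComponent w m a ∈ Ideal.span {f, g} := by
  refine weightedHomogeneousComponent_mem_span ?_ ha m
  rintro _ (rfl | rfl)
  exacts [⟨d, hf⟩, ⟨e, hg⟩]

variable {n c K}

theorem IsPrimeDivisor.eq_span_pair {p : Ideal (BiRing n K)} (hp : IsPrimeDivisor n c K p)
    (hP : (Ideal.span {cubicBundlePolyK n c K}).IsPrime) {f g : BiRing n K}
    (hfg : (Ideal.span {f, g}).IsPrime) (hPfg : cubicBundlePolyK n c K ∈ Ideal.span {f, g})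
    (hf : f ∉ Ideal.span {cubicBundlePolyK n c K}) (hfp : f ∈ p) (hgp : g ∈ p) :
    p = Ideal.span {f, g} := by
  refine hp.eq_of_le hP hfg hPfg (Ideal.subset_span (Set.mem_insert _ _)) hf ?_
  rw [Ideal.span_le, Set.pair_subset_iff]
  exact ⟨hfp, hgp⟩

end SpanPair

section Boundary

variable {n} {c} {j₀ j₁ j₂ : Fin (n + 1)}

theorem IsAdapted.fibreCubic_notMem (h : IsAdapted c j₀ j₁) :
    fibreCubic n c K j₀ ∉ Ideal.span {cubicBundlePolyK n c K} :=
  h.notMem_span_of_mem_supported K (isWeightedHomogeneous_fibreCubic n c K j₀)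
    (fibreCubic_mem_supported n c K j₀ j₀) (h.prime_fibreCubic K).ne_zero

theorem IsAdapted.X_inl_notMem (h : IsAdapted c j₀ j₁) {j : Fin (n + 1)} (hj : j ≠ j₀) :
    X (Sum.inl j) ∉ Ideal.span {cubicBundlePolyK n c K} :=
  h.notMem_span_of_mem_supported K (isWeightedHomogeneous_X_inl n K j)
    (X_inl_mem_supported n K hj) (X_ne_zero _)

theorem IsAdapted.X_inr_notMem (h : IsAdapted c j₀ j₁) (i : Fin 4) :
    X (Sum.inr i) ∉ Ideal.span {cubicBundlePolyK n c K} :=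
  h.notMem_span_of_mem_supported K (isWeightedHomogeneous_X_inr n K i)
    (X_inr_mem_supported n K j₀ i) (X_ne_zero _)

theorem IsAdapted.isLocalGenerator_span_pair (h : IsAdapted c j₀ j₁) :
    IsLocalGenerator (cubicBundlePolyK n c K)
      (Ideal.span {fibreCubic n c K j₀, cubicBundlePolyK n c K}) (fibreCubic n c K j₀) := by
  refine ⟨Ideal.subset_span (by simp), h.fibreCubic_notMem K, fun a ha => ⟨1, ?_, ?_⟩⟩
  · refine notMem_span_pair_of_map (aeval (Sum.elim 1 0) : BiRing n K →ₐ[K] K) ?_ ?_ (by simp)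
    · simp [aeval_fibreCubic]
    · simp [aeval_cubicBundlePolyK]
  · rwa [one_mul, ← Ideal.span_insert]

theorem IsAdapted.isPrimeDivisor_span_pair (h : IsAdapted c j₀ j₁)
    (h0 : c 0 j₂ = 0) (h1 : c 1 j₂ = 0) (h2 : c 2 j₂ ≠ 0 ∨ c 3 j₂ ≠ 0) :
    IsPrimeDivisor n c K (Ideal.span {fibreCubic n c K j₀, cubicBundlePolyK n c K}) := by
  refine (h.isLocalGenerator_span_pair K).isPrimeDivisor (h.isPrime_span_cubicBundlePolyK K)
    (h.isPrime_span_pair K h0 h1 h2) (Ideal.subset_span (by simp))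
    (fun f hf d => weightedHomogeneousComponent_mem_span_pair
      (isWeightedHomogeneous_fibreCubic n c K j₀) (isWeightedHomogeneous_cubicBundlePolyK n c K)
      hf d) ⟨j₁, ?_⟩ ⟨1, ?_⟩
  · refine notMem_span_pair_of_map (aeval (Sum.elim 1 0) : BiRing n K →ₐ[K] K) ?_ ?_ (by simp)
    · simp [aeval_fibreCubic]
    · simp [aeval_cubicBundlePolyK]
  · refine notMem_span_pair_of_map (evalAxis n K 1) ?_ ?_ (by simp [evalAxis])
    · simp [evalAxis_fibreCubic, h.c10]
    · exact (aeval_cubicBundlePolyK n c K _ _).trans (by simp)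

theorem IsAdapted.eq_span_pair (h : IsAdapted c j₀ j₁)
    (h0 : c 0 j₂ = 0) (h1 : c 1 j₂ = 0) (h2 : c 2 j₂ ≠ 0 ∨ c 3 j₂ ≠ 0) {p : Ideal (BiRing n K)}
    (hp : IsPrimeDivisor n c K p) (hF : fibreCubic n c K j₀ ∈ p) :
    p = Ideal.span {fibreCubic n c K j₀, cubicBundlePolyK n c K} :=
  hp.eq_span_pair (h.isPrime_span_cubicBundlePolyK K) (h.isPrime_span_pair K h0 h1 h2)
    (Ideal.subset_span (by simp)) (h.fibreCubic_notMem K) hF hp.mem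

end Boundary

section Line

variable {n} {c} {j₀ j₁ : Fin (n + 1)}

theorem cubicBundlePolyK_eq_add (hne : j₁ ≠ j₀) (hall : ∀ j, j = j₀ ∨ j = j₁) :
    cubicBundlePolyK n c K = X (Sum.inl j₀) * fibreCubic n c K j₀ +
      X (Sum.inl j₁) * fibreCubic n c K j₁ := by
  have : (Finset.univ : Finset (Fin (n + 1))) = {j₀, j₁} := by
    ext j
    simpa using hall j
  rw [cubicBundlePolyK_eq_sum, this, Finset.sum_pair hne.symm]

theorem X_inl_notMem_span_fibreCubic_X (hne : j₁ ≠ j₀) :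
    X (Sum.inl j₀) ∉ Ideal.span {fibreCubic n c K j₀, X (Sum.inl j₁)} := by
  refine notMem_span_pair_of_map (aeval (Sum.elim (Pi.single j₀ 1) 0) : BiRing n K →ₐ[K] K)
    ?_ ?_ (by simp)
  · exact (aeval_fibreCubic n c K _ _ _).trans (by simp)
  · simp [hne]

theorem IsAdapted.isLocalGenerator_span_fibreCubic_X (h : IsAdapted c j₀ j₁)
    (hall : ∀ j, j = j₀ ∨ j = j₁) : IsLocalGenerator (cubicBundlePolyK n c K)
      (Ideal.span {fibreCubic n c K j₀, X (Sum.inl j₁)}) (X (Sum.inl j₁)) := by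
  refine ⟨Ideal.subset_span (by simp), h.X_inl_notMem K h.ne,
    fun a ha => ⟨_, X_inl_notMem_span_fibreCubic_X K h.ne, ?_⟩⟩
  obtain ⟨u, v, rfl⟩ := Ideal.mem_span_pair.1 ha
  rw [← Ideal.span_insert, Ideal.mem_span_pair]
  exact ⟨X (Sum.inl j₀) * v - u * fibreCubic n c K j₁, u, by
    rw [cubicBundlePolyK_eq_add K h.ne hall]; ring⟩

theorem cubicBundlePolyK_mem_span_fibreCubic_X (hne : j₁ ≠ j₀) (hall : ∀ j, j = j₀ ∨ j = j₁) :
    cubicBundlePolyK n c K ∈ Ideal.span {fibreCubic n c K j₀, X (Sum.inl j₁)} := by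
  rw [cubicBundlePolyK_eq_add K hne hall]
  exact Ideal.mem_span_pair.2 ⟨X (Sum.inl j₀), fibreCubic n c K j₁, by ring⟩

theorem IsAdapted.isPrimeDivisor_span_fibreCubic_X (h : IsAdapted c j₀ j₁)
    (hall : ∀ j, j = j₀ ∨ j = j₁) :
    IsPrimeDivisor n c K (Ideal.span {fibreCubic n c K j₀, X (Sum.inl j₁)}) := by
  refine (h.isLocalGenerator_span_fibreCubic_X K hall).isPrimeDivisor
    (h.isPrime_span_cubicBundlePolyK K) (h.isPrime_span_fibreCubic_X K)
    (cubicBundlePolyK_mem_span_fibreCubic_X K h.ne hall)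
    (fun f hf d => weightedHomogeneousComponent_mem_span_pair
      (isWeightedHomogeneous_fibreCubic n c K j₀) (isWeightedHomogeneous_X_inl n K j₁) hf d)
    ⟨j₀, X_inl_notMem_span_fibreCubic_X K h.ne⟩ ⟨1, ?_⟩
  refine notMem_span_pair_of_map (evalAxis n K 1) ?_ ?_ (by simp [evalAxis])
  · simp [evalAxis_fibreCubic, h.c10]
  · simp [evalAxis]

theorem X_inl_notMem_span_pencil (j₀ j₁ j : Fin (n + 1)) :
    X (Sum.inl j) ∉ Ideal.span {fibreCubic n c K j₀, fibreCubic n c K j₁} := by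
  refine notMem_span_pair_of_map (aeval (Sum.elim 1 0) : BiRing n K →ₐ[K] K) ?_ ?_ (by simp) <;>
  simp [aeval_fibreCubic]

theorem X_inr_notMem_span_pencil (j₀ j₁ : Fin (n + 1)) (i : Fin 4) :
    X (Sum.inr i) ∉ Ideal.span {fibreCubic n c K j₀, fibreCubic n c K j₁} := by
  have hε : (DualNumber.eps : DualNumber K) ^ 3 = 0 := by
    rw [pow_succ, pow_two, DualNumber.eps_mul_eps, zero_mul]
  have hF : ∀ j, aeval (Sum.elim 0 fun _ => DualNumber.eps : _ → DualNumber K)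
      (fibreCubic n c K j) = 0 := fun j => by simp [aeval_fibreCubic, hε]
  refine notMem_span_pair_of_map _ (hF j₀) (hF j₁) fun h0 => ?_
  simpa using congrArg TrivSqZeroExt.snd h0

theorem IsAdapted.isLocalGenerator_span_pencil (h : IsAdapted c j₀ j₁)
    (hall : ∀ j, j = j₀ ∨ j = j₁) : IsLocalGenerator (cubicBundlePolyK n c K)
      (Ideal.span {fibreCubic n c K j₀, fibreCubic n c K j₁}) (fibreCubic n c K j₀) := by
  refine ⟨Ideal.subset_span (by simp), h.fibreCubic_notMem K,
    fun a ha => ⟨_, X_inl_notMem_span_pencil K j₀ j₁ j₁, ?_⟩⟩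
  obtain ⟨u, v, rfl⟩ := Ideal.mem_span_pair.1 ha
  rw [← Ideal.span_insert, Ideal.mem_span_pair]
  exact ⟨X (Sum.inl j₁) * u - v * X (Sum.inl j₀), v, by
    rw [cubicBundlePolyK_eq_add K h.ne hall]; ring⟩

theorem cubicBundlePolyK_mem_span_pencil (hne : j₁ ≠ j₀) (hall : ∀ j, j = j₀ ∨ j = j₁) :
    cubicBundlePolyK n c K ∈ Ideal.span {fibreCubic n c K j₀, fibreCubic n c K j₁} := by
  rw [cubicBundlePolyK_eq_add K hne hall]
  exact Ideal.mem_span_pair.2 ⟨_, _, rfl⟩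

theorem IsAdapted.isPrimeDivisor_span_pencil (h : IsAdapted c j₀ j₁)
    (hall : ∀ j, j = j₀ ∨ j = j₁) :
    IsPrimeDivisor n c K (Ideal.span {fibreCubic n c K j₀, fibreCubic n c K j₁}) :=
  (h.isLocalGenerator_span_pencil K hall).isPrimeDivisor (h.isPrime_span_cubicBundlePolyK K)
    (h.isPrime_span_pencil K) (cubicBundlePolyK_mem_span_pencil K h.ne hall)
    (fun _ hf d => weightedHomogeneousComponent_mem_span_pair
      (isWeightedHomogeneous_fibreCubic n c K j₀) (isWeightedHomogeneous_fibreCubic n c K j₁) hf d)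
    ⟨j₀, X_inl_notMem_span_pencil K j₀ j₁ j₀⟩ ⟨0, X_inr_notMem_span_pencil K j₀ j₁ 0⟩

variable {p : Ideal (BiRing n K)}

theorem IsAdapted.eq_span_fibreCubic_X (h : IsAdapted c j₀ j₁) (hall : ∀ j, j = j₀ ∨ j = j₁)
    (hp : IsPrimeDivisor n c K p) (hX : X (Sum.inl j₁) ∈ p) :
    p = Ideal.span {fibreCubic n c K j₀, X (Sum.inl j₁)} := by
  have hX₀ : X (Sum.inl j₀) ∉ p := fun hX₀ => by
    obtain ⟨j, hj⟩ := hp.relevant_x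
    rcases hall j with rfl | rfl
    exacts [hj hX₀, hj hX]
  have hF : fibreCubic n c K j₀ ∈ p := by
    have hmem := hp.mem
    rw [cubicBundlePolyK_eq_add K h.ne hall,
      Ideal.add_mem_iff_left _ (Ideal.mul_mem_right _ _ hX)] at hmem
    exact (hp.prime.mem_or_mem hmem).resolve_left hX₀
  exact hp.eq_span_pair (h.isPrime_span_cubicBundlePolyK K) (h.isPrime_span_fibreCubic_X K)
    (cubicBundlePolyK_mem_span_fibreCubic_X K h.ne hall) (h.fibreCubic_notMem K) hF hX

theorem IsAdapted.eq_span_fibreCubic_X_or_eq_span_pencil (h : IsAdapted c j₀ j₁)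
    (hall : ∀ j, j = j₀ ∨ j = j₁) (hp : IsPrimeDivisor n c K p) (hF : fibreCubic n c K j₀ ∈ p) :
    p = Ideal.span {fibreCubic n c K j₀, X (Sum.inl j₁)} ∨
      p = Ideal.span {fibreCubic n c K j₀, fibreCubic n c K j₁} := by
  have hmem := hp.mem
  rw [cubicBundlePolyK_eq_add K h.ne hall, Ideal.add_mem_iff_right _ (p.mul_mem_left _ hF)] at hmem
  exact (hp.prime.mem_or_mem hmem).imp (h.eq_span_fibreCubic_X K hall hp) fun hm =>
    hp.eq_span_pair (h.isPrime_span_cubicBundlePolyK K) (h.isPrime_span_pencil K)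
      (cubicBundlePolyK_mem_span_pencil K h.ne hall) (h.fibreCubic_notMem K) hF hm

theorem IsAdapted.exists_isLocalGenerator (h : IsAdapted c j₀ j₁)
    (hp : IsPrimeDivisor n c K p) : ∃ π, IsLocalGenerator (cubicBundlePolyK n c K) p π := by
  by_cases hF : fibreCubic n c K j₀ ∈ p
  · rcases h.third with hall | ⟨j₂, h0, h1, h2⟩
    · rcases h.eq_span_fibreCubic_X_or_eq_span_pencil K hall hp hF with rfl | rfl
      · exact ⟨_, h.isLocalGenerator_span_fibreCubic_X K hall⟩
      · exact ⟨_, h.isLocalGenerator_span_pencil K hall⟩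
    · rw [h.eq_span_pair K h0 h1 h2 hp hF]
      exact ⟨_, h.isLocalGenerator_span_pair K⟩
  · obtain ⟨ϖ, hϖ, rfl⟩ := hp.exists_pivotForm h hF
    exact ⟨ϖ, hϖ.isLocalGenerator h⟩

end Line

/-! ### Divisors of forms -/

section FormDivisors

variable {n} {c} {K} {j₀ j₁ : Fin (n + 1)} {f g : BiRing n K}

theorem IsAdapted.ordAt_mul (h : IsAdapted c j₀ j₁) (p : PrimeDivisor n c K)
    (hf : f ∉ Ideal.span {cubicBundlePolyK n c K}) (hg : g ∉ Ideal.span {cubicBundlePolyK n c K}) :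
    ordAt n c K p (f * g) = ordAt n c K p f + ordAt n c K p g :=
  have ⟨_, hπ⟩ := h.exists_isLocalGenerator K p.2
  hπ.ordAt_mul (h.isPrime_span_cubicBundlePolyK K) hf hg

theorem IsAdapted.ordAt_eq_zero_iff (h : IsAdapted c j₀ j₁) (p : PrimeDivisor n c K)
    (hf : f ∉ Ideal.span {cubicBundlePolyK n c K}) : ordAt n c K p f = 0 ↔ f ∉ p.1 :=
  have ⟨_, hπ⟩ := h.exists_isLocalGenerator K p.2
  hπ.ordAt_eq_zero_iff (h.isPrime_span_cubicBundlePolyK K) hf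

theorem IsAdapted.ordAt_one (h : IsAdapted c j₀ j₁) (p : PrimeDivisor n c K) :
    ordAt n c K p 1 = 0 :=
  (h.ordAt_eq_zero_iff p (h.isPrime_span_cubicBundlePolyK K).one_notMem).2 p.2.prime.one_notMem

theorem IsAdapted.finite_setOf_mem (h : IsAdapted c j₀ j₁)
    (hf : f ∉ Ideal.span {cubicBundlePolyK n c K}) : {p : PrimeDivisor n c K | f ∈ p.1}.Finite := by
  refine Set.Finite.of_injOn (f := Subtype.val) (t := (Ideal.span {f,
    cubicBundlePolyK n c K}).minimalPrimes) (fun p hp => ?_) Subtype.val_injective.injOn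
    (Ideal.finite_minimalPrimes_of_isNoetherianRing _ _)
  refine ⟨⟨p.2.prime, ?_⟩, fun q ⟨hq, hle⟩ hqp => ?_⟩
  · exact Ideal.span_le.2 (Set.pair_subset_iff.2 ⟨hp, p.2.mem⟩)
  · rw [Ideal.span_le, Set.pair_subset_iff] at hle
    exact (p.2.eq_of_le (h.isPrime_span_cubicBundlePolyK K) hq hle.2 hle.1 hf hqp).le

/-- The divisor `∑ ord_p(f) p` of a form `f`. -/
def IsAdapted.divisor (h : IsAdapted c j₀ j₁) (f : BiRing n K)
    (hf : f ∉ Ideal.span {cubicBundlePolyK n c K}) : PrimeDivisor n c K →₀ ℤ :=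
  Finsupp.ofSupportFinite (fun p => (ordAt n c K p f : ℤ)) <|
    (h.finite_setOf_mem hf).subset fun p hp => by_contra fun hfp =>
      hp (Nat.cast_eq_zero.2 ((h.ordAt_eq_zero_iff p hf).2 hfp))

theorem IsAdapted.divisor_apply (h : IsAdapted c j₀ j₁)
    (hf : f ∉ Ideal.span {cubicBundlePolyK n c K}) (p : PrimeDivisor n c K) :
    h.divisor f hf p = ordAt n c K p f :=
  rfl

/-- The group of pairs consisting of the divisor and the bidegree of a quotient `f / g` of two
forms. It is the graph of an isomorphism from divisor classes to bidegrees. -/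
def IsAdapted.formDivisors (h : IsAdapted c j₀ j₁) (K : Type) [Field K] [CharZero K] :
    AddSubgroup ((PrimeDivisor n c K →₀ ℤ) × (ℤ × ℤ)) where
  carrier := {D | ∃ (f g : BiRing n K) (d e : ℕ × ℕ),
    f.IsWeightedHomogeneous (biWeight n) d ∧ g.IsWeightedHomogeneous (biWeight n) e ∧
    f ∉ Ideal.span {cubicBundlePolyK n c K} ∧ g ∉ Ideal.span {cubicBundlePolyK n c K} ∧
    (∀ p, D.1 p = (ordAt n c K p f : ℤ) - (ordAt n c K p g : ℤ)) ∧
    D.2 = ((d.1 : ℤ) - e.1, (d.2 : ℤ) - e.2)}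
  zero_mem' := ⟨1, 1, 0, 0, isWeightedHomogeneous_one _ _, isWeightedHomogeneous_one _ _,
    (h.isPrime_span_cubicBundlePolyK K).one_notMem, (h.isPrime_span_cubicBundlePolyK K).one_notMem,
    by simp, by ext <;> simp⟩
  add_mem' := by
    rintro D D' ⟨f, g, d, e, hf, hg, hf0, hg0, hD, hd⟩ ⟨f', g', d', e', hf', hg', hf0', hg0', hD',
      hd'⟩
    have hP := h.isPrime_span_cubicBundlePolyK K
    refine ⟨f * f', g * g', d + d', e + e', hf.mul hf', hg.mul hg', hP.mul_notMem hf0 hf0',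
      hP.mul_notMem hg0 hg0', fun p => ?_, ?_⟩
    · rw [h.ordAt_mul p hf0 hf0', h.ordAt_mul p hg0 hg0', Prod.fst_add, Finsupp.add_apply, hD, hD']
      push_cast
      ring
    · rw [Prod.snd_add, hd, hd']
      ext <;> simp <;> ring
  neg_mem' := by
    rintro D ⟨f, g, d, e, hf, hg, hf0, hg0, hD, hd⟩
    refine ⟨g, f, e, d, hg, hf, hg0, hf0, fun p => ?_, ?_⟩
    · rw [Prod.fst_neg, Finsupp.neg_apply, hD, neg_sub]
    · rw [Prod.snd_neg, hd]
      ext <;> simp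

theorem IsAdapted.divisor_mem_formDivisors (h : IsAdapted c j₀ j₁) {d : ℕ × ℕ}
    (hf : f.IsWeightedHomogeneous (biWeight n) d)
    (hf0 : f ∉ Ideal.span {cubicBundlePolyK n c K}) :
    (h.divisor f hf0, ((d.1 : ℤ), (d.2 : ℤ))) ∈ h.formDivisors K :=
  ⟨f, 1, d, 0, hf, isWeightedHomogeneous_one _ _, hf0,
    (h.isPrime_span_cubicBundlePolyK K).one_notMem,
    fun p => by simp [h.divisor_apply, h.ordAt_one], by simp⟩

theorem IsAdapted.mem_principalDivisors_iff (h : IsAdapted c j₀ j₁)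
    {D : PrimeDivisor n c K →₀ ℤ} :
    D ∈ principalDivisors n c K ↔ (D, 0) ∈ h.formDivisors K := by
  constructor
  · intro hD
    have : principalDivisors n c K ≤ (h.formDivisors K).comap (AddMonoidHom.inl _ (ℤ × ℤ)) := by
      refine (AddSubgroup.closure_le _).2 ?_
      rintro D ⟨f, g, d, hf, hg, hf0, hg0, hD⟩
      exact ⟨f, g, d, d, hf, hg, hf0, hg0, hD, by ext <;> simp⟩
    exact this hD
  · rintro ⟨f, g, d, e, hf, hg, hf0, hg0, hD, hd⟩
    obtain rfl : d = e := by
      simp only [Prod.ext_iff, Prod.fst_zero, Prod.snd_zero] at hd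
      ext <;> lia
    exact AddSubgroup.subset_closure ⟨f, g, d, hf, hg, hf0, hg0, hD⟩

theorem IsAdapted.exists_mem_formDivisors_snd (h : IsAdapted c j₀ j₁) (δ : ℤ × ℤ) :
    ∃ D, (D, δ) ∈ h.formDivisors K := by
  have hx := h.divisor_mem_formDivisors (isWeightedHomogeneous_X_inl n K j₁) (h.X_inl_notMem K h.ne)
  have hy := h.divisor_mem_formDivisors (isWeightedHomogeneous_X_inr n K 0) (h.X_inr_notMem K 0)
  exact ⟨δ.1 • _ + δ.2 • _, by simpa using add_mem (zsmul_mem hx δ.1) (zsmul_mem hy δ.2)⟩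

theorem mem_of_forall_single_mem {ι : Type*} {H : AddSubgroup (ι →₀ ℤ)} {D : ι →₀ ℤ}
    (hD : ∀ i, D i ≠ 0 → Finsupp.single i 1 ∈ H) : D ∈ H := by
  rw [← Finsupp.sum_single D]
  refine sum_mem fun i hi => ?_
  simpa using zsmul_mem (hD i (Finsupp.mem_support_iff.1 hi)) (D i)

theorem IsAdapted.single_mem_of_isLocalGenerator (h : IsAdapted c j₀ j₁) {π : BiRing n K}
    {d : ℕ × ℕ} (hd : π.IsWeightedHomogeneous (biWeight n) d) {p : PrimeDivisor n c K}
    (hπ : IsLocalGenerator (cubicBundlePolyK n c K) p.1 π)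
    (H : ∀ q : PrimeDivisor n c K, q ≠ p → π ∈ q.1 →
      Finsupp.single q 1 ∈ (h.formDivisors K).map (AddMonoidHom.fst _ _)) :
    Finsupp.single p 1 ∈ (h.formDivisors K).map (AddMonoidHom.fst _ _) := by
  classical
  have hdiv : h.divisor π hπ.notMem ∈ (h.formDivisors K).map (AddMonoidHom.fst _ _) :=
    ⟨_, h.divisor_mem_formDivisors hd hπ.notMem, rfl⟩
  have hrest : h.divisor π hπ.notMem - Finsupp.single p 1 ∈
      (h.formDivisors K).map (AddMonoidHom.fst _ _) := by
    refine mem_of_forall_single_mem fun q hq => ?_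
    rw [Finsupp.sub_apply, h.divisor_apply] at hq
    obtain rfl | hqp := eq_or_ne q p
    · simp [hπ.ordAt_self (h.isPrime_span_cubicBundlePolyK K)] at hq
    · refine H q hqp (by_contra fun hπq => ?_)
      simp [(h.ordAt_eq_zero_iff q hπ.notMem).2 hπq, Finsupp.single_eq_of_ne hqp] at hq
  simpa using sub_mem hdiv hrest

theorem IsAdapted.single_mem_of_eq_span_fibreCubic_X (h : IsAdapted c j₀ j₁)
    (hall : ∀ j, j = j₀ ∨ j = j₁) {p : PrimeDivisor n c K}
    (hp : p.1 = Ideal.span {fibreCubic n c K j₀, X (Sum.inl j₁)}) :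
    Finsupp.single p 1 ∈ (h.formDivisors K).map (AddMonoidHom.fst _ _) :=
  h.single_mem_of_isLocalGenerator (isWeightedHomogeneous_X_inl n K j₁)
    (hp ▸ h.isLocalGenerator_span_fibreCubic_X K hall) fun q hq hXq =>
      absurd (Subtype.ext ((h.eq_span_fibreCubic_X K hall q.2 hXq).trans hp.symm)) hq

theorem IsAdapted.single_mem_of_fibreCubic_mem (h : IsAdapted c j₀ j₁) (p : PrimeDivisor n c K)
    (hp : fibreCubic n c K j₀ ∈ p.1) :
    Finsupp.single p 1 ∈ (h.formDivisors K).map (AddMonoidHom.fst _ _) := by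
  have hF := isWeightedHomogeneous_fibreCubic n c K j₀
  rcases h.third with hall | ⟨j₂, h0, h1, h2⟩
  · rcases h.eq_span_fibreCubic_X_or_eq_span_pencil K hall p.2 hp with hpX | hpF
    · exact h.single_mem_of_eq_span_fibreCubic_X hall hpX
    · refine h.single_mem_of_isLocalGenerator hF (hpF ▸ h.isLocalGenerator_span_pencil K hall)
        fun q hq hFq => h.single_mem_of_eq_span_fibreCubic_X hall ?_
      exact (h.eq_span_fibreCubic_X_or_eq_span_pencil K hall q.2 hFq).resolve_right
        fun hqF => hq (Subtype.ext (hqF.trans hpF.symm))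
  · have hpP := h.eq_span_pair K h0 h1 h2 p.2 hp
    exact h.single_mem_of_isLocalGenerator hF (hpP ▸ h.isLocalGenerator_span_pair K)
      fun q hq hFq =>
        absurd (Subtype.ext ((h.eq_span_pair K h0 h1 h2 q.2 hFq).trans hpP.symm)) hq

theorem IsPivotForm.pivotDivisor_eq_of_mem {ϖ ϖ' : BiRing n K} (hϖ : IsPivotForm c j₀ ϖ)
    (hϖ' : IsPivotForm c j₀ ϖ') (hmem : ϖ ∈ pivotDivisor c j₀ ϖ') :
    pivotDivisor c j₀ ϖ' = pivotDivisor c j₀ ϖ := by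
  obtain ⟨d, hd⟩ := hϖ.homogeneous
  rw [hϖ'.mem_pivotDivisor_iff hd hϖ.mem_supported] at hmem
  ext f
  rw [mem_pivotDivisor, mem_pivotDivisor,
    (hϖ'.prime.associated_of_dvd hϖ.prime hmem).dvd_iff_dvd_left]

theorem IsAdapted.exists_mem_formDivisors_fst (h : IsAdapted c j₀ j₁)
    (D : PrimeDivisor n c K →₀ ℤ) : ∃ δ, (D, δ) ∈ h.formDivisors K := by
  suffices D ∈ (h.formDivisors K).map (AddMonoidHom.fst _ _) by
    obtain ⟨⟨_, δ⟩, hδ, rfl⟩ := this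
    exact ⟨δ, hδ⟩
  refine mem_of_forall_single_mem fun p _ => ?_
  by_cases hp : fibreCubic n c K j₀ ∈ p.1
  · exact h.single_mem_of_fibreCubic_mem p hp
  obtain ⟨ϖ, hϖ, hpϖ⟩ := p.2.exists_pivotForm h hp
  obtain ⟨d, hd⟩ := hϖ.homogeneous
  refine h.single_mem_of_isLocalGenerator hd (hpϖ ▸ hϖ.isLocalGenerator h) fun q hqp hq => ?_
  by_cases hFq : fibreCubic n c K j₀ ∈ q.1
  · exact h.single_mem_of_fibreCubic_mem q hFq
  obtain ⟨ϖ', hϖ', hqϖ⟩ := q.2.exists_pivotForm h hFq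
  exact absurd (Subtype.ext (hqϖ.trans ((hϖ.pivotDivisor_eq_of_mem hϖ' (hqϖ ▸ hq)).trans
    hpϖ.symm))) hqp

end FormDivisors

/-! ### The Picard group in adapted coordinates -/

section PicardGroup

variable {n} {c} {K} {j₀ j₁ : Fin (n + 1)} {f g : BiRing n K} {d e : ℕ × ℕ}

theorem IsAdapted.dvd_fibreCubic_or_dvd_X (h : IsAdapted c j₀ j₁) {ϖ : BiRing n K} (hϖ : Prime ϖ)
    (hhom : ∃ d, ϖ.IsWeightedHomogeneous (biWeight n) d)
    (hsupp : ϖ ∈ supported K {Sum.inl j₀}ᶜ) (hpiv : ¬IsPivotForm c j₀ ϖ) :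
    ϖ ∣ fibreCubic n c K j₀ ∨ (∀ j, j = j₀ ∨ j = j₁) ∧ ϖ ∣ X (Sum.inl j₁) := by
  by_contra! hcon
  have hX : ∀ j, j ≠ j₀ → ϖ ∣ X (Sum.inl j) := fun j hj => by
    by_contra hd
    exact hpiv ⟨hϖ, hhom, hsupp, hcon.1, j, hj, hd⟩
  refine hcon.2 (fun j => or_iff_not_imp_left.2 fun hj => ?_) (hX j₁ h.ne)
  by_contra hj₁
  exact not_dvd_X_of_prime_of_dvd_X (Sum.inl_injective.ne hj₁) hϖ (hX j hj) (hX j₁ h.ne)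

theorem IsAdapted.exists_fibreCubic_mem (h : IsAdapted c j₀ j₁) :
    ∃ q : PrimeDivisor n c K, fibreCubic n c K j₀ ∈ q.1 ∧
      ((∀ j, j = j₀ ∨ j = j₁) → X (Sum.inl j₁) ∉ q.1) := by
  rcases h.third with hall | ⟨j₂, h0, h1, h2⟩
  · exact ⟨⟨_, h.isPrimeDivisor_span_pencil K hall⟩, Ideal.subset_span (by simp),
      fun _ => X_inl_notMem_span_pencil K j₀ j₁ j₁⟩
  · refine ⟨⟨_, h.isPrimeDivisor_span_pair K h0 h1 h2⟩, Ideal.subset_span (by simp),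
      fun hall => ?_⟩
    rcases hall j₂ with rfl | rfl
    exacts [absurd (h.c00.symm.trans h0) one_ne_zero, absurd (h.c11.symm.trans h1) one_ne_zero]

theorem IsAdapted.dvd_fibreCubic_or_dvd_X_of_isRelPrime (h : IsAdapted c j₀ j₁)
    (hf0 : f ≠ 0) (hf : f.IsWeightedHomogeneous (biWeight n) d)
    (hg : g.IsWeightedHomogeneous (biWeight n) e)
    (hfs : f ∈ supported K {Sum.inl j₀}ᶜ) (hgs : g ∈ supported K {Sum.inl j₀}ᶜ)
    (hrel : IsRelPrime f g) (hfg : ∀ p : PrimeDivisor n c K, f ∈ p.1 → g ∈ p.1)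
    {ϖ : BiRing n K} (hϖ : Prime ϖ) (hϖf : ϖ ∣ f) :
    ϖ ∣ fibreCubic n c K j₀ ∨ (∀ j, j = j₀ ∨ j = j₁) ∧ ϖ ∣ X (Sum.inl j₁) := by
  have hhom : ∃ d, ϖ.IsWeightedHomogeneous (biWeight n) d := by
    obtain ⟨t, rfl⟩ := hϖf
    exact exists_isWeightedHomogeneous_of_mul hf hf0
  refine h.dvd_fibreCubic_or_dvd_X hϖ hhom (mem_supported_compl_singleton_of_dvd hfs hf0 hϖf)
    fun hpiv => hϖ.not_isUnit (hrel hϖf ?_)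
  rw [← hpiv.mem_pivotDivisor_iff hg hgs]
  exact hfg ⟨_, hpiv.isPrimeDivisor h⟩ ((hpiv.mem_pivotDivisor_iff hf hfs).2 hϖf)

theorem IsAdapted.not_fibreCubic_dvd_of_isRelPrime (h : IsAdapted c j₀ j₁)
    (hg0 : g ≠ 0) (hf : f.IsWeightedHomogeneous (biWeight n) d)
    (hg : g.IsWeightedHomogeneous (biWeight n) e)
    (hfs : f ∈ supported K {Sum.inl j₀}ᶜ) (hgs : g ∈ supported K {Sum.inl j₀}ᶜ)
    (hrel : IsRelPrime f g) (hfg : ∀ p : PrimeDivisor n c K, f ∈ p.1 ↔ g ∈ p.1) :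
    ¬fibreCubic n c K j₀ ∣ f := by
  intro hFf
  obtain ⟨q, hFq, hXq⟩ := h.exists_fibreCubic_mem (K := K)
  have hgq : g ∈ q.1 := (hfg q).1 (Ideal.mem_of_dvd _ hFf hFq)
  obtain ⟨s, hs, hsg⟩ := UniqueFactorizationMonoid.exists_prime_factors g hg0
  obtain ⟨ϖ, hϖs, hϖq⟩ := (q.2.prime.multiset_prod_mem_iff_exists_mem s).1
    (Ideal.mem_of_dvd _ hsg.symm.dvd hgq)
  have hϖg : ϖ ∣ g := (Multiset.dvd_prod hϖs).trans hsg.dvd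
  rcases h.dvd_fibreCubic_or_dvd_X_of_isRelPrime hg0 hg hf hgs hfs hrel.symm
    (fun p => (hfg p).2) (hs ϖ hϖs) hϖg with hϖF | ⟨hall, hϖX⟩
  · exact (hs ϖ hϖs).not_isUnit (hrel (hϖF.trans hFf) hϖg)
  · exact hXq hall (Ideal.mem_of_dvd _ hϖX hϖq)

theorem IsAdapted.eq_or_eq_and_X_dvd_of_isRelPrime (h : IsAdapted c j₀ j₁)
    (hf0 : f ≠ 0) (hg0 : g ≠ 0) (hf : f.IsWeightedHomogeneous (biWeight n) d)
    (hg : g.IsWeightedHomogeneous (biWeight n) e)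
    (hfs : f ∈ supported K {Sum.inl j₀}ᶜ) (hgs : g ∈ supported K {Sum.inl j₀}ᶜ)
    (hrel : IsRelPrime f g) (hfg : ∀ p : PrimeDivisor n c K, f ∈ p.1 ↔ g ∈ p.1)
    (hfu : ¬IsUnit f) : (∀ j, j = j₀ ∨ j = j₁) ∧ X (Sum.inl j₁) ∣ f := by
  obtain ⟨ϖ, hϖ, hϖf⟩ := WfDvdMonoid.exists_irreducible_factor hfu hf0
  have hdvd {q : BiRing n K} (hq : Prime q) (hϖq : ϖ ∣ q) : q ∣ f :=
    (hϖ.prime.associated_of_dvd hq hϖq).symm.dvd.trans hϖf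
  rcases h.dvd_fibreCubic_or_dvd_X_of_isRelPrime hf0 hf hg hfs hgs hrel (fun p => (hfg p).1)
    hϖ.prime hϖf with hϖF | ⟨hall, hϖX⟩
  · exact absurd (hdvd (h.prime_fibreCubic K) hϖF)
      (h.not_fibreCubic_dvd_of_isRelPrime hg0 hf hg hfs hgs hrel hfg)
  · exact ⟨hall, hdvd X_prime hϖX⟩

theorem IsAdapted.isUnit_of_forall_mem_iff (h : IsAdapted c j₀ j₁)
    (hf0 : f ≠ 0) (hg0 : g ≠ 0) (hf : f.IsWeightedHomogeneous (biWeight n) d)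
    (hg : g.IsWeightedHomogeneous (biWeight n) e)
    (hfs : f ∈ supported K {Sum.inl j₀}ᶜ) (hgs : g ∈ supported K {Sum.inl j₀}ᶜ)
    (hrel : IsRelPrime f g) (hfg : ∀ p : PrimeDivisor n c K, f ∈ p.1 ↔ g ∈ p.1) :
    IsUnit f := by
  by_contra hfu
  obtain ⟨hall, hXf⟩ := h.eq_or_eq_and_X_dvd_of_isRelPrime hf0 hg0 hf hg hfs hgs hrel hfg hfu
  let q : PrimeDivisor n c K := ⟨_, h.isPrimeDivisor_span_fibreCubic_X K hall⟩
  have hgq : g ∈ q.1 := (hfg q).1 (Ideal.mem_of_dvd _ hXf (Ideal.subset_span (by simp)))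
  have hgu : ¬IsUnit g := fun hgu => q.2.prime.ne_top (Ideal.eq_top_of_isUnit_mem _ hgq hgu)
  have hXg := (h.eq_or_eq_and_X_dvd_of_isRelPrime hg0 hf0 hg hf hgs hfs hrel.symm
    (fun p => (hfg p).symm) hgu).2
  exact X_prime.not_isUnit (hrel hXf hXg)

theorem isWeightedHomogeneous_eq_zero_of_isUnit {σ R M : Type*} [CommRing R] [IsReduced R]
    [AddCommMonoid M] {w : σ → M} {f : MvPolynomial σ R} {d : M}
    (hf : f.IsWeightedHomogeneous w d) (hfu : IsUnit f) (hf0 : f ≠ 0) : d = 0 := by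
  obtain ⟨r, -, rfl⟩ := MvPolynomial.isUnit_iff_eq_C_of_isReduced.1 hfu
  exact IsWeightedHomogeneous.inj_right hf0 hf (isWeightedHomogeneous_C w r)

theorem IsAdapted.degree_eq_of_mem_supported (h : IsAdapted c j₀ j₁)
    (hf0 : f ≠ 0) (hg0 : g ≠ 0) (hf : f.IsWeightedHomogeneous (biWeight n) d)
    (hg : g.IsWeightedHomogeneous (biWeight n) e)
    (hfs : f ∈ supported K {Sum.inl j₀}ᶜ) (hgs : g ∈ supported K {Sum.inl j₀}ᶜ)
    (hfg : ∀ p, ordAt n c K p f = ordAt n c K p g) : d = e := by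
  obtain ⟨f, g, k, hrel, rfl, rfl⟩ := UniqueFactorizationMonoid.exists_reduced_factors' f g hg0
  obtain ⟨dk, hk⟩ := exists_isWeightedHomogeneous_of_mul hf hf0
  obtain ⟨d', hf'⟩ := exists_isWeightedHomogeneous_of_mul (mul_comm k f ▸ hf) (mul_comm k f ▸ hf0)
  obtain ⟨e', hg'⟩ := exists_isWeightedHomogeneous_of_mul (mul_comm k g ▸ hg) (mul_comm k g ▸ hg0)
  have hks := mem_supported_compl_singleton_of_dvd hfs hf0 (Dvd.intro _ rfl)
  have hfs' := mem_supported_compl_singleton_of_dvd hfs hf0 (Dvd.intro_left _ rfl)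
  have hgs' := mem_supported_compl_singleton_of_dvd hgs hg0 (Dvd.intro_left _ rfl)
  obtain ⟨hk0, hf0'⟩ := mul_ne_zero_iff.1 hf0
  have hg0' := right_ne_zero_of_mul hg0
  have hkP := h.notMem_span_of_mem_supported K hk hks hk0
  have hfP := h.notMem_span_of_mem_supported K hf' hfs' hf0'
  have hgP := h.notMem_span_of_mem_supported K hg' hgs' hg0'
  have hmem (p : PrimeDivisor n c K) : f ∈ p.1 ↔ g ∈ p.1 := by
    have hord := hfg p
    rw [h.ordAt_mul p hkP hfP, h.ordAt_mul p hkP hgP, add_right_inj] at hord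
    rw [← not_iff_not, ← h.ordAt_eq_zero_iff p hfP, ← h.ordAt_eq_zero_iff p hgP, hord]
  have hfu := h.isUnit_of_forall_mem_iff hf0' hg0' hf' hg' hfs' hgs' hrel hmem
  have hgu := h.isUnit_of_forall_mem_iff hg0' hf0' hg' hf' hgs' hfs' hrel.symm
    fun p => (hmem p).symm
  rw [IsWeightedHomogeneous.inj_right hf0 hf (hk.mul hf'),
    IsWeightedHomogeneous.inj_right hg0 hg (hk.mul hg'),
    isWeightedHomogeneous_eq_zero_of_isUnit hf' hfu hf0',
    isWeightedHomogeneous_eq_zero_of_isUnit hg' hgu hg0']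

theorem IsAdapted.ordAt_eliminate_mul_pow (h : IsAdapted c j₀ j₁)
    (hf0 : f ∉ Ideal.span {cubicBundlePolyK n c K}) (hf : f.IsWeightedHomogeneous (biWeight n) d)
    (k : ℕ) (p : PrimeDivisor n c K) :
    ordAt n c K p (eliminate j₀ (fibreCubic n c K j₀) (cubicBundlePolyK n c K) f *
        fibreCubic n c K j₀ ^ k) =
      ordAt n c K p (fibreCubic n c K j₀ ^ (d.1 + k)) + ordAt n c K p f := by
  have hP := h.isPrime_span_cubicBundlePolyK K
  rw [← h.ordAt_mul p (mt (hP.mem_of_pow_mem _) (h.fibreCubic_notMem K)) hf0]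
  refine ordAt_congr p ?_
  convert Ideal.mul_mem_right (fibreCubic n c K j₀ ^ k) _
    (eliminate_sub_mem j₀ (fibreCubic n c K j₀) (cubicBundlePolyK n c K) hf) using 1
  ring

/-- Multiplying by powers of `fibreCubic n c K j₀` makes both forms, modulo `P`, free of `x_{j₀}`
without changing the difference of their divisors. -/
theorem IsAdapted.degree_eq (h : IsAdapted c j₀ j₁)
    (hf0 : f ∉ Ideal.span {cubicBundlePolyK n c K}) (hg0 : g ∉ Ideal.span {cubicBundlePolyK n c K})
    (hf : f.IsWeightedHomogeneous (biWeight n) d) (hg : g.IsWeightedHomogeneous (biWeight n) e)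
    (hfg : ∀ p, ordAt n c K p f = ordAt n c K p g) : d = e := by
  have hF := isWeightedHomogeneous_fibreCubic n c K j₀
  have hF0 := (h.prime_fibreCubic K).ne_zero
  have hhom {f : BiRing n K} {d : ℕ × ℕ} (hf : f.IsWeightedHomogeneous (biWeight n) d) :
      (eliminate j₀ (fibreCubic n c K j₀) (cubicBundlePolyK n c K) f).IsWeightedHomogeneous
        (biWeight n) (eliminateDegree 3 d) :=
    isWeightedHomogeneous_map_algHom _ (isWeightedHomogeneous_eliminate_X j₀ hF
      (isWeightedHomogeneous_cubicBundlePolyK n c K)) hf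
  have hsupp (f : BiRing n K) (k : ℕ) :
      eliminate j₀ (fibreCubic n c K j₀) (cubicBundlePolyK n c K) f * fibreCubic n c K j₀ ^ k ∈
        supported K {Sum.inl j₀}ᶜ :=
    mul_mem (eliminate_mem_supported n c K j₀ f) (pow_mem (fibreCubic_mem_supported n c K j₀ j₀) k)
  have hdeg : eliminateDegree 3 d + e.1 • (0, 3) = eliminateDegree 3 e + d.1 • (0, 3) :=
    h.degree_eq_of_mem_supported
      (mul_ne_zero ((h.eliminate_eq_zero_iff K).not.2 hf0) (pow_ne_zero e.1 hF0))
      (mul_ne_zero ((h.eliminate_eq_zero_iff K).not.2 hg0) (pow_ne_zero d.1 hF0))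
      ((hhom hf).mul (hF.pow e.1)) ((hhom hg).mul (hF.pow d.1)) (hsupp f _) (hsupp g _)
      fun p => by rw [h.ordAt_eliminate_mul_pow hf0 hf, h.ordAt_eliminate_mul_pow hg0 hg, hfg p,
        add_comm d.1]
  simp only [eliminateDegree, AddMonoidHom.coe_mk, ZeroHom.coe_mk, Prod.ext_iff, Prod.fst_add,
    Prod.snd_add, Prod.smul_fst, Prod.smul_snd, smul_eq_mul] at hdeg
  ext <;> lia

theorem nonempty_quotient_addEquiv {A B : Type*} [AddCommGroup A] [AddGroup B]
    (Γ : AddSubgroup (A × B)) (N : AddSubgroup A) (hN : ∀ a, a ∈ N ↔ (a, 0) ∈ Γ)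
    (hfst : ∀ a, ∃ b, (a, b) ∈ Γ) (hsnd : ∀ b, ∃ a, (a, b) ∈ Γ)
    (hinj : ∀ b, (0, b) ∈ Γ → b = 0) : Nonempty (A ⧸ N ≃+ B) := by
  choose φ hφ using hfst
  have huniq {a : A} {b b' : B} (hb : (a, b) ∈ Γ) (hb' : (a, b') ∈ Γ) : b = b' :=
    sub_eq_zero.1 (hinj _ (by simpa using sub_mem hb hb'))
  let Φ : A →+ B := AddMonoidHom.mk' φ fun a a' =>
    huniq (hφ _) (by simpa using add_mem (hφ a) (hφ a'))
  have hker : N = Φ.ker := by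
    ext a
    rw [hN, AddMonoidHom.mem_ker]
    exact ⟨fun ha => huniq (hφ a) ha, fun ha => ha ▸ hφ a⟩
  subst hker
  exact ⟨QuotientAddGroup.quotientKerEquivOfSurjective Φ fun b =>
    (hsnd b).imp fun a ha => huniq (hφ a) ha⟩

theorem IsAdapted.nonempty_picX_addEquiv (h : IsAdapted c j₀ j₁) (K : Type) [Field K]
    [CharZero K] : Nonempty (PicX n c K ≃+ ℤ × ℤ) := by
  refine nonempty_quotient_addEquiv (h.formDivisors K) (principalDivisors n c K)
    (fun D => h.mem_principalDivisors_iff) h.exists_mem_formDivisors_fst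
    h.exists_mem_formDivisors_snd ?_
  rintro δ ⟨f, g, d, e, hf, hg, hf0, hg0, hD, hδ⟩
  obtain rfl := h.degree_eq hf0 hg0 hf hg fun p => by
    have hDp := hD p
    simp only [Finsupp.coe_zero, Pi.zero_apply] at hDp
    lia
  exact hδ.trans (by ext <;> simp)

end PicardGroup

/-! ### Linear changes of coordinates on `ℙⁿ` -/

section CoordinateChange

theorem eq_of_lt_comap_ringEquiv {A B : Type*} [CommRing A] [CommRing B] (e : A ≃+* B) {P : A}
    {p : Ideal B} (hp : ∀ q : Ideal B, q.IsPrime → e P ∈ q → q < p →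
      ∀ r : Ideal B, r.IsPrime → e P ∈ r → r ≤ q → r = q)
    {q r : Ideal A} (hq : q.IsPrime) (hPq : P ∈ q) (hqp : q < p.comap e)
    (hr : r.IsPrime) (hPr : P ∈ r) (hrq : r ≤ q) : r = q := by
  have hmap {I : Ideal A} : (I.map e).comap e = I := Ideal.comap_map_of_bijective e e.bijective
  have hmap' : (p.comap e).map e = p := Ideal.map_comap_of_surjective e e.surjective p
  rw [← hmap (I := r), ← hmap (I := q),
    hp _ (Ideal.map_isPrime_of_equiv e) (Ideal.mem_map_of_mem e hPq) ?_
      _ (Ideal.map_isPrime_of_equiv e) (Ideal.mem_map_of_mem e hPr) (Ideal.map_mono hrq)]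
  refine lt_of_le_of_ne ((Ideal.map_mono hqp.le).trans_eq hmap') ?_
  rintro rfl
  exact hqp.ne hmap.symm

variable {n}

/-- The linear substitution `x_k ↦ ∑ⱼ M_{kj} x_j`. -/
def linearSubst (M : Matrix (Fin (n + 1)) (Fin (n + 1)) ℚ) : BiRing n K →ₐ[K] BiRing n K :=
  aeval (Sum.elim (fun k => ∑ j, C (algebraMap ℚ K (M k j)) * X (Sum.inl j))
    fun i => X (Sum.inr i))

variable (M N : Matrix (Fin (n + 1)) (Fin (n + 1)) ℚ)

theorem linearSubst_X_inl (k : Fin (n + 1)) :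
    linearSubst K M (X (Sum.inl k)) = ∑ j, C (algebraMap ℚ K (M k j)) * X (Sum.inl j) := by
  simp [linearSubst]

theorem linearSubst_X_inr (i : Fin 4) : linearSubst K M (X (Sum.inr i)) = X (Sum.inr i) := by
  simp [linearSubst]

theorem linearSubst_sum (v : Fin (n + 1) → ℚ) :
    linearSubst K M (∑ k, C (algebraMap ℚ K (v k)) * X (Sum.inl k)) =
      ∑ j, C (algebraMap ℚ K (∑ k, v k * M k j)) * X (Sum.inl j) := by
  simp only [map_sum, map_mul, linearSubst_X_inl, Finset.mul_sum, Finset.sum_mul, algHom_C]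
  rw [Finset.sum_comm]
  simp [mul_assoc, algebraMap_eq]

theorem linearSubst_linearSubst_of_mul_eq_one (h : M * N = 1) (f : BiRing n K) :
    linearSubst K N (linearSubst K M f) = f := by
  suffices (linearSubst K N).comp (linearSubst K M) = AlgHom.id K _ from DFunLike.congr_fun this f
  ext i : 1
  rcases i with k | i
  · rw [AlgHom.comp_apply, linearSubst_X_inl, linearSubst_sum]
    simp only [← Matrix.mul_apply, h, Matrix.one_apply]
    simp
  · simp [linearSubst_X_inr]

theorem linearSubst_cubicBundlePolyK :
    linearSubst K M (cubicBundlePolyK n c K) =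
      cubicBundlePolyK n (fun i j => ∑ k, c i k * M k j) K := by
  simp only [cubicBundlePolyK, map_sum (linearSubst K M) (fun i => _ * X (Sum.inr i) ^ 3), map_mul,
    map_pow, linearSubst_sum, linearSubst_X_inr]

theorem isWeightedHomogeneous_linearSubst_X (i : Fin (n + 1) ⊕ Fin 4) :
    (linearSubst K M (X i)).IsWeightedHomogeneous (biWeight n) (biWeight n i) := by
  rcases i with k | i
  · rw [linearSubst_X_inl]
    exact IsWeightedHomogeneous.sum _ _ _ fun j _ => (isWeightedHomogeneous_X_inl n K j).C_mul _
  · rw [linearSubst_X_inr]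
    exact isWeightedHomogeneous_X_inr n K i

theorem isWeightedHomogeneous_linearSubst {f : BiRing n K} {d : ℕ × ℕ}
    (hf : f.IsWeightedHomogeneous (biWeight n) d) :
    (linearSubst K M f).IsWeightedHomogeneous (biWeight n) d :=
  isWeightedHomogeneous_map_algHom (AddMonoidHom.id _) (isWeightedHomogeneous_linearSubst_X K M) hf

theorem weightedHomogeneousComponent_linearSubst (f : BiRing n K) (d : ℕ × ℕ) :
    weightedHomogeneousComponent (biWeight n) d (linearSubst K M f) =
      linearSubst K M (weightedHomogeneousComponent (biWeight n) d f) :=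
  weightedHomogeneousComponent_map_algHom (g := AddMonoidHom.id _) Function.injective_id
    (isWeightedHomogeneous_linearSubst_X K M) f d

variable {K M N}

/-- An invertible linear substitution as an automorphism of the coordinate ring. -/
def linearSubstEquiv (hMN : M * N = 1) (hNM : N * M = 1) : BiRing n K ≃+* BiRing n K :=
  RingEquiv.ofRingHom (linearSubst K M : _ →+* _) (linearSubst K N : _ →+* _)
    (RingHom.ext fun f => linearSubst_linearSubst_of_mul_eq_one K N M hNM f)
    (RingHom.ext fun f => linearSubst_linearSubst_of_mul_eq_one K M N hMN f)

theorem linearSubstEquiv_apply (hMN : M * N = 1) (hNM : N * M = 1) (f : BiRing n K) :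
    linearSubstEquiv hMN hNM f = linearSubst K M f :=
  rfl

variable {c} {c' : Fin 4 → Fin (n + 1) → ℚ}

theorem IsPrimeDivisor.comap_linearSubstEquiv {p : Ideal (BiRing n K)}
    (hp : IsPrimeDivisor n c' K p) (hMN : M * N = 1) (hNM : N * M = 1)
    (hc : linearSubst K M (cubicBundlePolyK n c K) = cubicBundlePolyK n c' K) :
    IsPrimeDivisor n c K (p.comap (linearSubstEquiv hMN hNM)) where
  prime := hp.prime.comap _
  bihom f hf d := by
    rw [Ideal.mem_comap, linearSubstEquiv_apply] at hf ⊢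
    rw [← weightedHomogeneousComponent_linearSubst]
    exact hp.bihom _ hf d
  relevant_x := by
    by_contra! hX
    obtain ⟨k, hk⟩ := hp.relevant_x
    have hmem : linearSubst K N (X (Sum.inl k)) ∈ p.comap (linearSubstEquiv hMN hNM) := by
      rw [linearSubst_X_inl]
      exact sum_mem fun j _ => Ideal.mul_mem_left _ _ (hX j)
    rw [Ideal.mem_comap, linearSubstEquiv_apply,
      linearSubst_linearSubst_of_mul_eq_one K N M hNM] at hmem
    exact hk hmem
  relevant_y := by
    obtain ⟨i, hi⟩ := hp.relevant_y
    refine ⟨i, ?_⟩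
    rwa [Ideal.mem_comap, linearSubstEquiv_apply, linearSubst_X_inr]
  mem := by
    rw [Ideal.mem_comap, linearSubstEquiv_apply, hc]
    exact hp.mem
  exists_lt := by
    obtain ⟨q, hq, hPq, hqp⟩ := hp.exists_lt
    refine ⟨_, hq.comap _, ?_, (linearSubstEquiv hMN hNM).idealComapOrderIso.lt_iff_lt.2 hqp⟩
    rwa [Ideal.mem_comap, linearSubstEquiv_apply, hc]
  height_one q hq hPq hqp r hr hPr hrq :=
    eq_of_lt_comap_ringEquiv (linearSubstEquiv hMN hNM)
      (by simpa only [linearSubstEquiv_apply, hc] using hp.height_one) hq hPq hqp hr hPr hrq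

theorem linearSubst_symm_cubicBundlePolyK (hMN : M * N = 1)
    (hc : linearSubst K M (cubicBundlePolyK n c K) = cubicBundlePolyK n c' K) :
    linearSubst K N (cubicBundlePolyK n c' K) = cubicBundlePolyK n c K := by
  rw [← hc, linearSubst_linearSubst_of_mul_eq_one K M N hMN]

/-- The permutation of prime divisors induced by an invertible linear substitution. -/
def primeDivisorEquiv (hMN : M * N = 1) (hNM : N * M = 1)
    (hc : linearSubst K M (cubicBundlePolyK n c K) = cubicBundlePolyK n c' K) :
    PrimeDivisor n c' K ≃ PrimeDivisor n c K where
  toFun p := ⟨_, p.2.comap_linearSubstEquiv hMN hNM hc⟩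
  invFun p := ⟨_, p.2.comap_linearSubstEquiv hNM hMN (linearSubst_symm_cubicBundlePolyK hMN hc)⟩
  left_inv p := Subtype.ext <| Ideal.ext fun f => iff_of_eq <|
    congrArg (· ∈ p.1) (linearSubst_linearSubst_of_mul_eq_one K N M hNM f)
  right_inv p := Subtype.ext <| Ideal.ext fun f => iff_of_eq <|
    congrArg (· ∈ p.1) (linearSubst_linearSubst_of_mul_eq_one K M N hMN f)

theorem comap_pow_sup_span {A B : Type*} [CommRing A] [CommRing B] (e : A ≃+* B) (p : Ideal B)
    (P : A) (m : ℕ) : p.comap e ^ m ⊔ Ideal.span {P} = (p ^ m ⊔ Ideal.span {e P}).comap e := by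
  rw [← e.symm_symm, ← Ideal.map_comap_of_equiv, ← Ideal.map_comap_of_equiv, Ideal.map_sup,
    Ideal.map_pow, Ideal.map_span, Set.image_singleton]
  simp

theorem ordAt_primeDivisorEquiv (hMN : M * N = 1) (hNM : N * M = 1)
    (hc : linearSubst K M (cubicBundlePolyK n c K) = cubicBundlePolyK n c' K)
    (p : PrimeDivisor n c' K) (f : BiRing n K) :
    ordAt n c K (primeDivisorEquiv hMN hNM hc p) f = ordAt n c' K p (linearSubst K M f) := by
  have hp : (primeDivisorEquiv hMN hNM hc p).1 = p.1.comap (linearSubstEquiv hMN hNM) := rfl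
  unfold ordAt
  congr 1
  ext m
  simp only [Set.mem_ofPred_eq, hp, comap_pow_sup_span, Ideal.mem_comap, map_mul,
    linearSubstEquiv_apply, hc]
  exact ((linearSubstEquiv hMN hNM).surjective.exists
    (p := fun s => s ∉ p.1 ∧ s * linearSubst K M f ∈ _)).symm

theorem linearSubst_notMem_span (hMN : M * N = 1) (hNM : N * M = 1)
    (hc : linearSubst K M (cubicBundlePolyK n c K) = cubicBundlePolyK n c' K) {f : BiRing n K}
    (hf : f ∉ Ideal.span {cubicBundlePolyK n c K}) :
    linearSubst K M f ∉ Ideal.span {cubicBundlePolyK n c' K} := by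
  rw [Ideal.mem_span_singleton] at hf ⊢
  rwa [← hc, ← linearSubstEquiv_apply hMN hNM, ← linearSubstEquiv_apply hMN hNM, map_dvd_iff]

theorem domCongr_mem_principalDivisors (hMN : M * N = 1) (hNM : N * M = 1)
    (hc : linearSubst K M (cubicBundlePolyK n c K) = cubicBundlePolyK n c' K)
    {D : PrimeDivisor n c' K →₀ ℤ} (hD : D ∈ principalDivisors n c' K) :
    Finsupp.domCongr (primeDivisorEquiv hMN hNM hc) D ∈ principalDivisors n c K := by
  suffices principalDivisors n c' K ≤ (principalDivisors n c K).comap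
    (Finsupp.domCongr (M := ℤ) (primeDivisorEquiv hMN hNM hc)).toAddMonoidHom from this hD
  refine (AddSubgroup.closure_le _).2 ?_
  rintro D ⟨f, g, d, hf, hg, hf0, hg0, hD⟩
  have hc' := linearSubst_symm_cubicBundlePolyK hMN hc
  refine AddSubgroup.subset_closure ⟨linearSubst K N f, linearSubst K N g, d,
    isWeightedHomogeneous_linearSubst K N hf, isWeightedHomogeneous_linearSubst K N hg,
    linearSubst_notMem_span hNM hMN hc' hf0, linearSubst_notMem_span hNM hMN hc' hg0, fun p => ?_⟩
  obtain ⟨p, rfl⟩ := (primeDivisorEquiv hMN hNM hc).surjective p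
  rw [ordAt_primeDivisorEquiv, ordAt_primeDivisorEquiv,
    linearSubst_linearSubst_of_mul_eq_one K N M hNM,
    linearSubst_linearSubst_of_mul_eq_one K N M hNM, ← hD]
  simp [Finsupp.domCongr]

theorem nonempty_picX_addEquiv_of_linearSubst (hMN : M * N = 1) (hNM : N * M = 1)
    (hc : linearSubst K M (cubicBundlePolyK n c K) = cubicBundlePolyK n c' K) :
    Nonempty (PicX n c' K ≃+ PicX n c K) := by
  refine ⟨QuotientAddGroup.congr _ _ (Finsupp.domCongr (primeDivisorEquiv hMN hNM hc))
    (le_antisymm ?_ fun D hD => ?_)⟩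
  · rintro _ ⟨D, hD, rfl⟩
    exact domCongr_mem_principalDivisors hMN hNM hc hD
  · exact ⟨_, domCongr_mem_principalDivisors hNM hMN (linearSubst_symm_cubicBundlePolyK hMN hc) hD,
      (Finsupp.domCongr (primeDivisorEquiv hMN hNM hc)).apply_symm_apply D⟩

end CoordinateChange

section AdaptedCoordinates

variable {F V ι κ : Type*} [Field F] [AddCommGroup V] [Module F V]

theorem exists_apply_eq_zero_and_eq_one [Infinite F] [Finite ι] {φ ψ : Module.Dual F V}
    (hψ : ∃ v, φ v = 0 ∧ ψ v ≠ 0) (L : ι → Module.Dual F V)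
    (hL : ∀ i, ∃ v, φ v = 0 ∧ L i v ≠ 0) : ∃ v, φ v = 0 ∧ ψ v = 1 ∧ ∀ i, L i v ≠ 0 := by
  obtain ⟨v, hv, hLv⟩ := Module.Dual.exists_forall_mem_ne_zero_of_forall_exists
    (LinearMap.ker φ) (fun o : Option ι => o.elim ψ L) (Option.forall.2 ⟨hψ, hL⟩)
  have hψv : ψ v ≠ 0 := hLv none
  refine ⟨(ψ v)⁻¹ • v, ?_, ?_, fun i => ?_⟩
  · rw [map_smul, LinearMap.mem_ker.1 hv, smul_zero]
  · rw [map_smul, smul_eq_mul, inv_mul_cancel₀ hψv]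
  · rw [map_smul]
    exact smul_ne_zero (inv_ne_zero hψv) (hLv (some i))

theorem exists_isEchelonPair [Infinite F] (L : Fin 4 → Module.Dual F V)
    (hL : ∀ i k, i ≠ k → ∃ v, L i v = 0 ∧ L k v ≠ 0) :
    ∃ v w, IsEchelonPair (fun i => L i v) (fun i => L i w) := by
  obtain ⟨v, hv1, hv0, hv⟩ := exists_apply_eq_zero_and_eq_one (hL 1 0 (by decide))
    ![L 2, L 3] (Fin.forall_fin_two.2 ⟨hL 1 2 (by decide), hL 1 3 (by decide)⟩)
  obtain ⟨hv2, hv3⟩ : L 2 v ≠ 0 ∧ L 3 v ≠ 0 := Fin.forall_fin_two.1 hv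
  have hdet : ∃ w, L 0 w = 0 ∧ (L 2 v • L 3 - L 3 v • L 2) w ≠ 0 := by
    obtain ⟨u, hu2, hu3⟩ := hL 2 3 (by decide)
    refine ⟨u - L 0 u • v, by simp [hv0], ?_⟩
    have : (L 2 v • L 3 - L 3 v • L 2) (u - L 0 u • v) = L 2 v * L 3 u := by
      simp only [LinearMap.sub_apply, LinearMap.smul_apply, map_sub, map_smul, smul_eq_mul, hu2]
      ring
    exact this ▸ mul_ne_zero hv2 hu3
  obtain ⟨w, hw0, hw1, hw⟩ := exists_apply_eq_zero_and_eq_one (hL 0 1 (by decide))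
    ![L 2, L 3, L 2 v • L 3 - L 3 v • L 2]
    (Fin.forall_fin_succ.2 ⟨hL 0 2 (by decide), Fin.forall_fin_two.2 ⟨hL 0 3 (by decide), hdet⟩⟩)
  exact ⟨v, w, hv0, hv1, hw0, hw1, hv2, hv3, hw 0, hw 1, hw 2⟩

theorem IsEchelonPair.linearIndependent {L : Fin 4 → Module.Dual F V} {v w : V}
    (h : IsEchelonPair (fun i => L i v) (fun i => L i w)) : LinearIndependent F ![v, w] := by
  refine LinearIndependent.pair_iff.2 fun a b hab => ⟨?_, ?_⟩
  · simpa [h.c00, h.c01] using congrArg (L 0) hab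
  · simpa [h.c10, h.c11] using congrArg (L 1) hab

theorem IsEchelonPair.linearIndependent_cons {L : Fin 4 → Module.Dual F V} {v w u : V}
    (h : IsEchelonPair (fun i => L i v) (fun i => L i w)) (h0 : L 0 u = 0) (h1 : L 1 u = 0)
    (hu : u ≠ 0) : LinearIndependent F ![u, v, w] := by
  refine linearIndependent_finCons.2 ⟨h.linearIndependent, fun hmem => hu ?_⟩
  rw [Matrix.range_cons_cons_empty, Submodule.mem_span_pair] at hmem
  obtain ⟨a, b, rfl⟩ := hmem
  have ha : a = 0 := by simpa [h.c00, h.c01] using h0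
  have hb : b = 0 := by simpa [h.c10, h.c11] using h1
  rw [ha, hb, zero_smul, zero_smul, add_zero]

theorem exists_invertible_matrix_col_eq [Fintype κ] [DecidableEq κ] {v : ι → κ → F}
    (hv : LinearIndependent F v) : ∃ (M N : Matrix κ κ F) (e : ι → κ), M * N = 1 ∧ N * M = 1 ∧
      Function.Injective e ∧ ∀ i, M.col (e i) = v i := by
  let b₀ := Module.Basis.extend hv.linearIndepOn_id
  let σ := b₀.indexEquiv (Pi.basisFun F κ)
  let b := b₀.reindex σ
  refine ⟨(Pi.basisFun F κ).toMatrix b, b.toMatrix (Pi.basisFun F κ),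
    fun i => σ ⟨v i, Module.Basis.subset_extend hv.linearIndepOn_id ⟨i, rfl⟩⟩,
    Module.Basis.toMatrix_mul_toMatrix_flip _ _, Module.Basis.toMatrix_mul_toMatrix_flip _ _,
    fun i i' h => hv.injective (congrArg Subtype.val (σ.injective h)), fun i => funext fun k => ?_⟩
  simp [Module.Basis.toMatrix_apply, b, b₀]

theorem exists_dotProduct_eq_zero_and_ne_zero [Finite ι] [Fintype κ] {a : ι → κ → F} {b : κ → F}
    (hb : b ∉ Submodule.span F (Set.range a)) : ∃ v, (∀ i, a i ⬝ᵥ v = 0) ∧ b ⬝ᵥ v ≠ 0 := by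
  classical
  by_contra! h
  have hmem := mem_span_of_iInf_ker_le_ker (L := dotProductEquiv F κ ∘ a)
    (K := dotProductEquiv F κ b) fun v hv => h v fun i => (Submodule.mem_iInf _).1 hv i
  rw [Set.range_comp, ← LinearEquiv.coe_coe, ← Submodule.map_span] at hmem
  exact hb (by simpa using (Submodule.mem_map_equiv _).1 hmem)

theorem exists_notMem_span_range_of_card_lt_rank {m : Type*} [Fintype ι] [Finite m] [Fintype κ]
    {A : Matrix m κ F} (a : ι → κ → F) (h : Fintype.card ι < A.rank) :
    ∃ k, A k ∉ Submodule.span F (Set.range a) := by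
  by_contra! hA
  refine h.not_ge ?_
  rw [Matrix.rank_eq_finrank_span_row]
  exact (Submodule.finrank_mono (Submodule.span_le.2 (Set.range_subset_iff.2 hA))).trans
    (finrank_range_le_card a)

variable {n} {c}

theorem exists_isAdapted (hpair : Pairwise fun i k => LinearIndependent ℚ ![c i, c k])
    (hrank : min (n + 1) 3 ≤ (Matrix.of c).rank) :
    ∃ (M N : Matrix (Fin (n + 1)) (Fin (n + 1)) ℚ) (j₀ j₁ : Fin (n + 1)), M * N = 1 ∧ N * M = 1 ∧
      IsAdapted (fun i j => ∑ k, c i k * M k j) j₀ j₁ := by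
  let L : Fin 4 → Module.Dual ℚ (Fin (n + 1) → ℚ) := fun i => dotProductEquiv ℚ _ (c i)
  obtain ⟨v, w, hvw⟩ := exists_isEchelonPair L fun i k hik => by
    have hk : c k ∉ Submodule.span ℚ (Set.range ![c i]) := by
      simpa using (linearIndependent_finCons.1 (hpair hik.symm)).2
    obtain ⟨v, hv, hkv⟩ := exists_dotProduct_eq_zero_and_ne_zero hk
    exact ⟨v, hv 0, hkv⟩
  rcases le_or_gt n 1 with hn | hn
  · obtain ⟨M, N, e, hMN, hNM, he, hM⟩ := exists_invertible_matrix_col_eq hvw.linearIndependent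
    have hsurj : Function.Surjective e := (he.bijective_of_nat_card_le (by simpa)).2
    refine ⟨M, N, e 0, e 1, hMN, hNM, ?_, he.ne (by decide), Or.inl fun j => ?_⟩
    · rwa [← show M.col (e 0) = v from hM 0, ← show M.col (e 1) = w from hM 1] at hvw
    · obtain ⟨i, rfl⟩ := hsurj j
      fin_cases i <;> simp
  · obtain ⟨k, hk⟩ := exists_notMem_span_range_of_card_lt_rank (A := Matrix.of c) ![c 0, c 1]
      (by simpa using lt_of_lt_of_le (by lia) hrank)
    obtain ⟨u, hu, hku⟩ := exists_dotProduct_eq_zero_and_ne_zero hk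
    have hu0 : L 0 u = 0 := hu 0
    have hu1 : L 1 u = 0 := hu 1
    have hu2 : L 2 u ≠ 0 ∨ L 3 u ≠ 0 := by
      fin_cases k
      exacts [absurd hu0 hku, absurd hu1 hku, Or.inl hku, Or.inr hku]
    obtain ⟨M, N, e, hMN, hNM, he, hM⟩ := exists_invertible_matrix_col_eq
      (hvw.linearIndependent_cons hu0 hu1 (by rintro rfl; simp at hku))
    refine ⟨M, N, e 1, e 2, hMN, hNM, ?_, he.ne (by decide), Or.inr ⟨e 0, ?_⟩⟩
    · rwa [← show M.col (e 1) = v from hM 1, ← show M.col (e 2) = w from hM 2] at hvw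
    · rw [← show M.col (e 0) = u from hM 0] at hu0 hu1 hu2
      exact ⟨hu0, hu1, hu2⟩

theorem linearIndependent_pair_of_card_le {m : ℕ} (hm : 2 ≤ m) [Fintype ι]
    (hmι : m ≤ Fintype.card ι) {a : ι → V}
    (h : ∀ s : Finset ι, s.card = m → LinearIndependent F (fun i : s => a i)) :
    Pairwise fun i k => LinearIndependent F ![a i, a k] := fun i k hik => by
  classical
  obtain ⟨s, hs, hcard⟩ := Finset.exists_superset_card_eq
    ((Finset.card_pair hik).trans_le hm) hmι
  have hs' : LinearIndepOn F a s := h s hcard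
  refine LinearIndependent.pair_iff.2 ((LinearIndepOn.pair_iff a hik).1 (hs'.mono ?_))
  simpa [Finset.insert_subset_iff, Set.insert_subset_iff] using hs

theorem le_rank_of_linearIndependent [Fintype κ] {A : Matrix ι κ F} (s : Finset ι)
    (h : LinearIndependent F fun i : s => A i) : s.card ≤ A.rank := by
  have hrank : (A.submatrix (Subtype.val : s → ι) id).rank = Fintype.card s :=
    LinearIndependent.rank_matrix h
  rw [← Fintype.card_coe, ← hrank]
  exact A.rank_submatrix_le _ _

end AdaptedCoordinates

theorem picard_group_of_cubicBundle_general
    (hpair : Pairwise fun i k => LinearIndependent ℚ ![c i, c k])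
    (hrank : min (n + 1) 3 ≤ (Matrix.of c).rank) :
    Nonempty (PicX n c K ≃+ ℤ × ℤ) := by
  obtain ⟨M, N, j₀, j₁, hMN, hNM, h⟩ := exists_isAdapted hpair hrank
  obtain ⟨φ⟩ := nonempty_picX_addEquiv_of_linearSubst hMN hNM (linearSubst_cubicBundlePolyK c K M)
  obtain ⟨ψ⟩ := h.nonempty_picX_addEquiv K
  exact ⟨φ.symm.trans ψ⟩

/-- the Picard group of `X_{n+2}` over an arbitrary field containing `ℚ`
is isomorphic to `ℤ ⊕ ℤ`. -/
theorem picard_group_of_cubicBundle (hn : 1 ≤ n)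
    (hind : ∀ s : Finset (Fin 4), s.card = min (n + 1) 4 →
      LinearIndependent ℚ (fun i : s => c i)) :
    Nonempty (PicX n c K ≃+ ℤ × ℤ) := by
  obtain ⟨s, -, hs⟩ := Finset.exists_subset_card_eq (s := Finset.univ (α := Fin 4))
    (n := min (n + 1) 4) (by simp)
  have hrank : s.card ≤ (Matrix.of c).rank := le_rank_of_linearIndependent s (hind s hs)
  exact picard_group_of_cubicBundle_general n c K
    (linearIndependent_pair_of_card_le (by lia) (by simp) hind) (by lia)

end
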